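/- For any integer k ≥ 1 and real a > 1, the sum Σ_{n > x} Λ(n)^k n^{-a} equals (x^{1-a} (log x)^{k-1})/(a-1) · (1 + O(1/log x)) as x → ∞, where the implied constant depends only on k and a. -/

import Mathlib

open Real ArithmeticFunction Filter

/-- The entire function `(s - 1) ζ(s)`. -/
noncomputable def subOneMulZeta : ℂ → ℂ :=
  Function.update (fun s : ℂ => (s - 1) * riemannZeta s) 1 1

lemma subOneMulZeta_one : subOneMulZeta 1 = 1 := by simp [subOneMulZeta]

lemma subOneMulZeta_of_ne {s : ℂ} (hs : s ≠ 1) :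
    subOneMulZeta s = (s - 1) * riemannZeta s := by
  simp [subOneMulZeta, hs]

lemma subOneMulZeta_eventuallyEq {s : ℂ} (hs : s ≠ 1) :
    subOneMulZeta =ᶠ[nhds s] fun s => (s - 1) * riemannZeta s := by
  filter_upwards [isOpen_ne.mem_nhds hs] with z hz using subOneMulZeta_of_ne hz

lemma differentiable_subOneMulZeta : Differentiable ℂ subOneMulZeta := by
  rw [← differentiableOn_univ,
    ← Complex.differentiableOn_compl_singleton_and_continuousAt_iff (c := 1) univ_mem]
  refine ⟨fun s hs => DifferentiableAt.differentiableWithinAt ?_, ?_⟩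
  · have hs' : s ≠ 1 := by simpa using hs
    exact (((differentiableAt_id.sub_const 1).mul
      (differentiableAt_riemannZeta hs')).congr_of_eventuallyEq (subOneMulZeta_eventuallyEq hs'))
  · exact continuousAt_update_same.2 riemannZeta_residue_one

lemma subOneMulZeta_ne_zero {s : ℂ} (hs : 1 ≤ s.re) : subOneMulZeta s ≠ 0 := by
  rcases eq_or_ne s 1 with rfl | h
  · simp [subOneMulZeta_one]
  · rw [subOneMulZeta_of_ne h]
    exact mul_ne_zero (sub_ne_zero.2 h) (riemannZeta_ne_zero_of_one_le_re hs)

/-- The first-order Euler–Maclaurin correction for `(s - 1) n ^ (-s)` on `[n, n + 1]`. -/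
noncomputable def zetaCorrection (n : ℕ) (s : ℂ) : ℂ :=
  (s - 1) * ((n : ℂ) + 1) ^ (-s) + ((n : ℂ) + 1) ^ (1 - s) - (n : ℂ) ^ (1 - s)

lemma norm_zetaCorrection_le {n : ℕ} (hn : 1 ≤ n) {s : ℂ} (hs : 0 < s.re) :
    ‖zetaCorrection n s‖ ≤ ‖s‖ * ‖s - 1‖ * (n : ℝ) ^ (-s.re - 1) := by
  rcases eq_or_ne s 1 with rfl | hs1
  · simp [zetaCorrection]
  have hs0 : s ≠ 0 := by rintro rfl; simp at hs
  have hn0 : (0 : ℝ) < n := by exact_mod_cast hn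
  have hpos : ∀ u ∈ Set.Icc (n : ℝ) (n + 1), 0 < u := fun u hu => hn0.trans_le hu.1
  have hmem : (n + 1 : ℝ) ∈ Set.Icc (n : ℝ) (n + 1) := ⟨by linarith, le_rfl⟩
  have hg : ∀ u ∈ Set.Icc (n : ℝ) (n + 1),
      ‖(u : ℂ) ^ (-s) - ((n + 1 : ℝ) : ℂ) ^ (-s)‖ ≤ ‖s‖ * (n : ℝ) ^ (-s.re - 1) := by
    intro u hu
    have h := Convex.norm_image_sub_le_of_norm_hasDerivWithin_le
      (f := fun u : ℝ => (u : ℂ) ^ (-s)) (f' := fun u : ℝ => (-s) * (u : ℂ) ^ (-s - 1))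
      (s := Set.Icc (n : ℝ) (n + 1)) (C := ‖s‖ * (n : ℝ) ^ (-s.re - 1)) (x := n + 1) (y := u)
      (fun v hv => (hasDerivAt_ofReal_cpow_const (hpos v hv).ne' (neg_ne_zero.2 hs0)).hasDerivWithinAt)
      (fun v hv => by
        rw [norm_mul, norm_neg, Complex.norm_cpow_eq_rpow_re_of_pos (hpos v hv)]
        simp only [Complex.sub_re, Complex.neg_re, Complex.one_re]
        gcongr ?_ * ?_
        exact rpow_le_rpow_of_nonpos hn0 hv.1 (by linarith))
      (convex_Icc _ _) hmem hu
    refine h.trans (mul_le_of_le_one_right (by positivity) ?_)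
    rw [Real.norm_eq_abs, abs_le]
    constructor <;> linarith [hu.1, hu.2]
  have h := Convex.norm_image_sub_le_of_norm_hasDerivWithin_le
      (f := fun u : ℝ => (u : ℂ) ^ (1 - s) - ((1 - s) * ((n + 1 : ℝ) : ℂ) ^ (-s)) * (u : ℂ))
      (f' := fun u : ℝ => (1 - s) * (u : ℂ) ^ (1 - s - 1) -
        ((1 - s) * ((n + 1 : ℝ) : ℂ) ^ (-s)) * 1)
      (s := Set.Icc (n : ℝ) (n + 1)) (C := ‖s‖ * ‖s - 1‖ * (n : ℝ) ^ (-s.re - 1))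
      (x := n) (y := n + 1)
      (fun v hv => ((hasDerivAt_ofReal_cpow_const (hpos v hv).ne' (sub_ne_zero.2 hs1.symm)).sub
        ((Complex.ofRealCLM.hasDerivAt).const_mul _)).hasDerivWithinAt)
      (fun v hv => by
        rw [mul_one, ← mul_sub, norm_mul, norm_sub_rev 1 s, mul_comm ‖s‖, mul_assoc]
        gcongr ?_ * ?_
        rw [show 1 - s - 1 = -s by ring]
        exact hg v hv)
      (convex_Icc _ _) ⟨le_rfl, by linarith⟩ hmem
  rw [add_sub_cancel_left, norm_one, mul_one] at h
  have he : zetaCorrection n s = ((n + 1 : ℝ) : ℂ) ^ (1 - s) -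
      (1 - s) * ((n + 1 : ℝ) : ℂ) ^ (-s) * ((n + 1 : ℝ) : ℂ) -
      (((n : ℝ) : ℂ) ^ (1 - s) - (1 - s) * ((n + 1 : ℝ) : ℂ) ^ (-s) * ((n : ℝ) : ℂ)) := by
    simp only [zetaCorrection]
    push_cast
    ring
  rwa [he]

lemma differentiable_zetaCorrection {n : ℕ} (hn : 1 ≤ n) : Differentiable ℂ (zetaCorrection n) := by
  have h1 : (n : ℂ) ≠ 0 := by exact_mod_cast (by omega : n ≠ 0)
  have h2 : (n : ℂ) + 1 ≠ 0 := by exact_mod_cast (by omega : n + 1 ≠ 0)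
  unfold zetaCorrection
  intro s
  refine ((((differentiableAt_id.sub_const 1).mul
    (differentiableAt_id.neg.const_cpow (Or.inl h2))).add
    ((differentiableAt_id.const_sub 1).const_cpow (Or.inl h2)))).sub
    ((differentiableAt_id.const_sub 1).const_cpow (Or.inl h1))

lemma subOneMulZeta_eq_of_one_lt_re {N : ℕ} (hN : 1 ≤ N) {s : ℂ} (hs : 1 < s.re) :
    subOneMulZeta s = (s - 1) * ∑ n ∈ Finset.range N, ((n : ℂ) + 1) ^ (-s) + (N : ℂ) ^ (1 - s) +
      ∑' m : ℕ, zetaCorrection (N + m) s := by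
  have hs1 : s ≠ 1 := by rintro rfl; simp at hs
  have hsum : Summable fun n : ℕ => ((n : ℂ) + 1) ^ (-s) := by
    have := (summable_nat_add_iff 1).2 (Complex.summable_one_div_nat_cpow.2 hs)
    refine this.congr fun n => ?_
    rw [one_div, Complex.cpow_neg]; push_cast; rfl
  have hz : riemannZeta s = ∑ n ∈ Finset.range N, ((n : ℂ) + 1) ^ (-s) +
      ∑' m : ℕ, (((m + N : ℕ) : ℂ) + 1) ^ (-s) := by
    rw [hsum.sum_add_tsum_nat_add, zeta_eq_tsum_one_div_nat_add_one_cpow hs]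
    simp [Complex.cpow_neg]
  have hlim : Tendsto (fun M : ℕ => ((N + M : ℕ) : ℂ) ^ (1 - s)) atTop (nhds 0) := by
    rw [tendsto_zero_iff_norm_tendsto_zero]
    have : Tendsto (fun M : ℕ => ((N + M : ℕ) : ℝ) ^ (-(s.re - 1))) atTop (nhds 0) :=
      ((tendsto_rpow_neg_atTop (by linarith : 0 < s.re - 1)).comp
        tendsto_natCast_atTop_atTop).comp (tendsto_add_atTop_nat N |>.congr fun n => by ring)
    refine this.congr fun M => ?_
    rw [Complex.norm_natCast_cpow_of_pos (by omega)]
    simp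
  have hE : HasSum (fun m : ℕ => zetaCorrection (N + m) s)
      ((s - 1) * ∑' m : ℕ, (((m + N : ℕ) : ℂ) + 1) ^ (-s) + (0 - (N : ℂ) ^ (1 - s))) := by
    have h1 := (((summable_nat_add_iff N).2 hsum).hasSum).mul_left (s - 1)
    have h2 : HasSum (fun m : ℕ => ((N + (m + 1) : ℕ) : ℂ) ^ (1 - s) - ((N + m : ℕ) : ℂ) ^ (1 - s))
        (0 - (N : ℂ) ^ (1 - s)) := by
      have hsm : Summable (fun m : ℕ => zetaCorrection (N + m) s) := by
        refine Summable.of_norm_bounded (g := fun m : ℕ => ‖s‖ * ‖s - 1‖ * ((N + m : ℕ) : ℝ) ^ (-s.re - 1))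
          ?_ (fun m => norm_zetaCorrection_le (by omega) (by linarith))
        refine Summable.mul_left _ ?_
        have := (summable_nat_add_iff N).2 (Real.summable_nat_rpow.2 (by linarith : -s.re - 1 < -1))
        exact this.congr fun m => by rw [add_comm]
      have hs2 := hsm.sub h1.summable
      have hs3 : Summable (fun m : ℕ => ((N + (m + 1) : ℕ) : ℂ) ^ (1 - s) -
          ((N + m : ℕ) : ℂ) ^ (1 - s)) := by
        refine hs2.congr fun m => ?_
        simp only [zetaCorrection]
        push_cast
        rw [add_comm (m : ℂ) N]
        ring_nf
      refine hs3.hasSum_iff_tendsto_nat.2 ?_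
      simp_rw [Finset.sum_range_sub (fun m : ℕ => ((N + m : ℕ) : ℂ) ^ (1 - s))]
      simpa using hlim.sub_const ((N : ℂ) ^ (1 - s))
    refine (h1.add h2).congr_fun fun m => ?_
    simp only [zetaCorrection]
    push_cast
    rw [add_comm (m : ℂ) N]
    ring_nf
  rw [subOneMulZeta_of_ne hs1, hE.tsum_eq, hz]
  ring

lemma subOneMulZeta_eq {N : ℕ} (hN : 1 ≤ N) {s : ℂ} (hs : 0 < s.re) :
    subOneMulZeta s = (s - 1) * ∑ n ∈ Finset.range N, ((n : ℂ) + 1) ^ (-s) + (N : ℂ) ^ (1 - s) +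
      ∑' m : ℕ, zetaCorrection (N + m) s := by
  have hopen : IsOpen {s : ℂ | 0 < s.re} := isOpen_lt continuous_const Complex.continuous_re
  have hconv : IsPreconnected {s : ℂ | 0 < s.re} := (convex_halfSpace_re_gt 0).isPreconnected
  have hN0 : (N : ℂ) ≠ 0 := by exact_mod_cast (by omega : N ≠ 0)
  have hd : DifferentiableOn ℂ (fun s => ∑' m : ℕ, zetaCorrection (N + m) s) {s : ℂ | 0 < s.re} := by
    intro z hz
    have hz' : 0 < z.re := hz
    set U : Set ℂ := {w : ℂ | z.re / 2 < w.re} ∩ Metric.ball 0 (‖z‖ + 1) with hU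
    have hUo : IsOpen U := (isOpen_lt continuous_const Complex.continuous_re).inter Metric.isOpen_ball
    have hzU : z ∈ U := ⟨by simp; linarith, by simp⟩
    have h : DifferentiableOn ℂ (fun s => ∑' m : ℕ, zetaCorrection (N + m) s) U := by
      refine Complex.differentiableOn_tsum_of_summable_norm
        (u := fun m : ℕ => (‖z‖ + 1) * (‖z‖ + 2) * ((N + m : ℕ) : ℝ) ^ (-(z.re / 2) - 1)) ?_
        (fun m => (differentiable_zetaCorrection (by omega)).differentiableOn) hUo ?_
      · refine Summable.mul_left _ ?_
        have := (summable_nat_add_iff N).2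
          (Real.summable_nat_rpow.2 (by linarith : -(z.re / 2) - 1 < -1))
        exact this.congr fun m => by rw [add_comm]
      · rintro m w ⟨hw1, hw2⟩
        have hw1' : z.re / 2 < w.re := hw1
        have hw2' : ‖w‖ < ‖z‖ + 1 := by simpa using hw2
        refine (norm_zetaCorrection_le (by omega) (by linarith)).trans ?_
        have : ‖w - 1‖ ≤ ‖z‖ + 2 := by
          have := norm_sub_le w 1
          rw [norm_one] at this
          linarith
        gcongr
        exact_mod_cast (by omega : 1 ≤ N + m)
    exact (h.differentiableAt (hUo.mem_nhds hzU)).differentiableWithinAt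
  refine AnalyticOnNhd.eqOn_of_preconnected_of_eventuallyEq (f := subOneMulZeta)
    (g := fun s => (s - 1) * ∑ n ∈ Finset.range N, ((n : ℂ) + 1) ^ (-s) + (N : ℂ) ^ (1 - s) +
      ∑' m : ℕ, zetaCorrection (N + m) s) (U := {s : ℂ | 0 < s.re}) (z₀ := 2)
    (differentiable_subOneMulZeta.differentiableOn.analyticOnNhd hopen) ?_ hconv (by simp) ?_ hs
  · refine DifferentiableOn.analyticOnNhd ?_ hopen
    refine DifferentiableOn.add (Differentiable.differentiableOn fun z => ?_) hd
    refine ((differentiableAt_id.sub_const 1).mul (DifferentiableAt.fun_sum fun n _ => ?_)).add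
      ((differentiableAt_id.const_sub 1).const_cpow (Or.inl hN0))
    exact differentiableAt_id.neg.const_cpow (Or.inl (by exact_mod_cast (by omega : n + 1 ≠ 0)))
  · have : {s : ℂ | 1 < s.re} ∈ nhds (2 : ℂ) :=
      (isOpen_lt continuous_const Complex.continuous_re).mem_nhds (by simp)
    filter_upwards [this] with z hz using subOneMulZeta_eq_of_one_lt_re hN hz

lemma exists_norm_riemannZeta_le {δ : ℝ} (hδ : 0 < δ) (hδ' : δ ≤ 1 / 4) :
    ∃ C : ℝ, 0 < C ∧ ∀ s : ℂ, 1 - δ ≤ s.re → s.re ≤ 3 → 1 ≤ |s.im| →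
      ‖riemannZeta s‖ ≤ C * |s.im| ^ (2 * δ) := by
  have hsm : Summable fun n : ℕ => ((n + 1 : ℕ) : ℝ) ^ (-1 - δ) :=
    (summable_nat_add_iff 1).2 (Real.summable_nat_rpow.2 (by linarith))
  set S := ∑' n : ℕ, ((n + 1 : ℕ) : ℝ) ^ (-1 - δ) with hS
  have hS0 : 0 ≤ S := tsum_nonneg fun n => by positivity
  refine ⟨2 * (5 * S + 1), by positivity, fun s hs1 hs3 ht => ?_⟩
  set t := |s.im| with htdef
  set N := ⌈t⌉₊ with hN
  have htN : t ≤ N := Nat.le_ceil t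
  have hN1 : 1 ≤ N := by exact_mod_cast ht.trans htN
  have hN1' : (1 : ℝ) ≤ N := by exact_mod_cast hN1
  have hN2 : (N : ℝ) ≤ 2 * t := by linarith [Nat.ceil_lt_add_one (by linarith : 0 ≤ t)]
  have hne : s ≠ 1 := by rintro rfl; simp [htdef] at ht; linarith
  have htn : t ≤ ‖s - 1‖ := by simpa [htdef] using Complex.abs_im_le_norm (s - 1)
  have hsub : 0 < ‖s - 1‖ := by linarith
  have hsn : ‖s‖ ≤ 4 * N := by
    have h1 := Complex.norm_le_abs_re_add_abs_im s
    have h2 : |s.re| ≤ 3 := abs_le.2 ⟨by linarith, hs3⟩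
    linarith
  have hpow : ∀ a b : ℝ, a ≤ b → (N : ℝ) ^ a ≤ (N : ℝ) ^ b :=
    fun a b h => rpow_le_rpow_of_exponent_le hN1' h
  have h1 : ‖∑ n ∈ Finset.range N, ((n : ℂ) + 1) ^ (-s)‖ ≤ S * (N : ℝ) ^ (2 * δ) := by
    calc ‖∑ n ∈ Finset.range N, ((n : ℂ) + 1) ^ (-s)‖
        ≤ ∑ n ∈ Finset.range N, ((n + 1 : ℕ) : ℝ) ^ (-1 - δ) * (N : ℝ) ^ (2 * δ) := by
          refine norm_sum_le_of_le _ fun n hn => ?_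
          have hn' : n + 1 ≤ N := Finset.mem_range.1 hn
          have : ((n : ℂ) + 1) = ((n + 1 : ℕ) : ℂ) := by push_cast; rfl
          rw [this, Complex.norm_natCast_cpow_of_pos (by omega), Complex.neg_re]
          calc ((n + 1 : ℕ) : ℝ) ^ (-s.re) ≤ ((n + 1 : ℕ) : ℝ) ^ (-1 - δ + 2 * δ) :=
                rpow_le_rpow_of_exponent_le (by exact_mod_cast (by omega : 1 ≤ n + 1))
                  (by linarith)
            _ = ((n + 1 : ℕ) : ℝ) ^ (-1 - δ) * ((n + 1 : ℕ) : ℝ) ^ (2 * δ) :=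
                rpow_add (by positivity) _ _
            _ ≤ _ := by gcongr
      _ = (∑ n ∈ Finset.range N, ((n + 1 : ℕ) : ℝ) ^ (-1 - δ)) * (N : ℝ) ^ (2 * δ) := by
          rw [Finset.sum_mul]
      _ ≤ _ := by
          gcongr
          exact hsm.sum_le_tsum _ fun n _ => by positivity
  have h2 : ‖(N : ℂ) ^ (1 - s)‖ ≤ ‖s - 1‖ * (N : ℝ) ^ (2 * δ) := by
    rw [Complex.norm_natCast_cpow_of_pos (by omega)]
    calc (N : ℝ) ^ (1 - s).re ≤ (N : ℝ) ^ (2 * δ) := hpow _ _ (by simp; linarith)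
      _ ≤ _ := le_mul_of_one_le_left (by positivity) (by linarith)
  have h3 : ‖∑' m : ℕ, zetaCorrection (N + m) s‖ ≤ ‖s - 1‖ * (4 * S * (N : ℝ) ^ (2 * δ)) := by
    have hshift : Summable fun m : ℕ => ((m + 1 : ℕ) : ℝ) ^ (-1 - δ) *
        (‖s‖ * ‖s - 1‖ * (N : ℝ) ^ (-(1 - 2 * δ))) := hsm.mul_right _
    calc ‖∑' m : ℕ, zetaCorrection (N + m) s‖
        ≤ ∑' m : ℕ, ((m + 1 : ℕ) : ℝ) ^ (-1 - δ) *
            (‖s‖ * ‖s - 1‖ * (N : ℝ) ^ (-(1 - 2 * δ))) := by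
          refine tsum_of_norm_bounded hshift.hasSum fun m => ?_
          refine (norm_zetaCorrection_le (by omega) (by linarith)).trans ?_
          have hNm : (1 : ℝ) ≤ ((N + m : ℕ) : ℝ) := by exact_mod_cast (by omega : 1 ≤ N + m)
          have : ((N + m : ℕ) : ℝ) ^ (-s.re - 1) ≤
              ((m + 1 : ℕ) : ℝ) ^ (-1 - δ) * (N : ℝ) ^ (-(1 - 2 * δ)) := by
            calc ((N + m : ℕ) : ℝ) ^ (-s.re - 1)
                ≤ ((N + m : ℕ) : ℝ) ^ ((-1 - δ) + (-(1 - 2 * δ))) :=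
                  rpow_le_rpow_of_exponent_le hNm (by linarith)
              _ = ((N + m : ℕ) : ℝ) ^ (-1 - δ) * ((N + m : ℕ) : ℝ) ^ (-(1 - 2 * δ)) :=
                  rpow_add (by linarith) _ _
              _ ≤ _ := by
                  gcongr ?_ * ?_
                  · exact rpow_le_rpow_of_nonpos (by positivity)
                      (by exact_mod_cast (by omega : m + 1 ≤ N + m)) (by linarith)
                  · exact rpow_le_rpow_of_nonpos (by positivity)
                      (by exact_mod_cast (by omega : N ≤ N + m)) (by linarith)
          calc _ ≤ ‖s‖ * ‖s - 1‖ * (((m + 1 : ℕ) : ℝ) ^ (-1 - δ) * (N : ℝ) ^ (-(1 - 2 * δ))) := by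
                gcongr
            _ = _ := by ring
      _ = S * (‖s‖ * ‖s - 1‖ * (N : ℝ) ^ (-(1 - 2 * δ))) := by rw [tsum_mul_right]
      _ ≤ S * (4 * N * ‖s - 1‖ * (N : ℝ) ^ (-(1 - 2 * δ))) := by gcongr
      _ = ‖s - 1‖ * (4 * S * ((N : ℝ) ^ (1 : ℝ) * (N : ℝ) ^ (-(1 - 2 * δ)))) := by
          rw [rpow_one]; ring
      _ = _ := by
          rw [← rpow_add (by linarith)]
          ring_nf
  have hη : ‖s - 1‖ * ‖riemannZeta s‖ ≤ ‖s - 1‖ * ((5 * S + 1) * (N : ℝ) ^ (2 * δ)) := by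
    rw [← norm_mul, ← subOneMulZeta_of_ne hne, subOneMulZeta_eq hN1 (by linarith)]
    refine (norm_add₃_le).trans ?_
    rw [norm_mul]
    have := mul_le_mul_of_nonneg_left h1 hsub.le
    linarith
  refine (le_of_mul_le_mul_left hη hsub).trans ?_
  calc (5 * S + 1) * (N : ℝ) ^ (2 * δ) ≤ (5 * S + 1) * (2 * t) ^ (2 * δ) := by gcongr
    _ = (5 * S + 1) * (2 ^ (2 * δ) * t ^ (2 * δ)) := by rw [mul_rpow (by norm_num) (by linarith)]
    _ ≤ (5 * S + 1) * (2 ^ (1 : ℝ) * t ^ (2 * δ)) := by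
        gcongr
        · norm_num
        · linarith
    _ = _ := by rw [rpow_one]; ring

lemma exists_norm_riemannZeta_deriv_le {ε : ℝ} (hε : 0 < ε) (hε' : ε ≤ 1 / 2) :
    ∃ C : ℝ, 1 ≤ C ∧ 1 / ε ≤ C ∧ ∀ s : ℂ, 1 - ε / 4 ≤ s.re → s.re ≤ 2 → 2 ≤ |s.im| →
      ‖riemannZeta s‖ ≤ C * |s.im| ^ ε ∧ ‖deriv riemannZeta s‖ ≤ C * |s.im| ^ ε := by
  obtain ⟨C, hC0, hC⟩ := exists_norm_riemannZeta_le (δ := ε / 2) (by linarith) (by linarith)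
  rw [mul_div_cancel₀ _ (two_ne_zero)] at hC
  refine ⟨C * 2 / (ε / 4) + 1 + 1 / ε + C, ?_, ?_, fun s hs1 hs2 ht => ?_⟩
  · have : 0 < C * 2 / (ε / 4) + 1 / ε + C := by positivity
    linarith
  · have : 0 < C * 2 / (ε / 4) + 1 + C := by positivity
    linarith
  have ht0 : 0 < |s.im| ^ ε := rpow_pos_of_pos (by linarith) _
  constructor
  · refine (hC s (by linarith) (by linarith) (by linarith)).trans ?_
    gcongr
    have : 0 < C * 2 / (ε / 4) + 1 + 1 / ε := by positivity
    linarith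
  · have hball : ∀ z ∈ Metric.closedBall s (ε / 4), |z.re - s.re| ≤ ε / 4 ∧ |z.im - s.im| ≤ ε / 4 := by
      intro z hz
      rw [Metric.mem_closedBall, dist_eq_norm] at hz
      exact ⟨(by simpa using (Complex.abs_re_le_norm (z - s)).trans hz),
        (by simpa using (Complex.abs_im_le_norm (z - s)).trans hz)⟩
    have him : ∀ z ∈ Metric.closedBall s (ε / 4), 1 ≤ |z.im| ∧ |z.im| ≤ 2 * |s.im| := by
      intro z hz
      have h1 := (hball z hz).2
      have h2 := abs_sub_abs_le_abs_sub z.im s.im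
      have h3 := abs_sub_abs_le_abs_sub s.im z.im
      rw [abs_sub_comm] at h3
      constructor <;> linarith
    have h := Complex.norm_deriv_le_of_forall_mem_sphere_norm_le (f := riemannZeta) (c := s)
      (R := ε / 4) (C := C * 2 * |s.im| ^ ε) (by linarith)
      (by
        refine DifferentiableOn.diffContOnCl_ball (U := Metric.closedBall s (ε / 4))
          (fun z hz => (differentiableAt_riemannZeta ?_).differentiableWithinAt) le_rfl
        rintro rfl
        have := (him _ hz).1
        norm_num at this)
      (fun z hz => by
        have hz := Metric.sphere_subset_closedBall hz
        have h1 := (hball z hz).1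
        rw [abs_le] at h1
        refine (hC z (by linarith) (by linarith) (him z hz).1).trans ?_
        rw [mul_assoc]
        gcongr
        calc |z.im| ^ ε ≤ (2 * |s.im|) ^ ε := by gcongr; exact (him z hz).2
          _ = 2 ^ ε * |s.im| ^ ε := mul_rpow (by norm_num) (by positivity)
          _ ≤ 2 ^ (1 : ℝ) * |s.im| ^ ε := by
              gcongr
              · norm_num
              · linarith
          _ = _ := by rw [rpow_one])
    refine h.trans ?_
    rw [mul_div_right_comm]
    gcongr
    have : 0 < 1 + 1 / ε + C := by positivity
    linarith

lemma one_le_norm_riemannZeta_product {x : ℝ} (hx : 0 < x) (y : ℝ) :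
    1 ≤ ‖riemannZeta (1 + x)‖ ^ 3 * ‖riemannZeta (1 + x + Complex.I * y)‖ ^ 4 *
      ‖riemannZeta (1 + x + 2 * Complex.I * y)‖ := by
  have h := DirichletCharacter.norm_LFunction_product_ge_one (1 : DirichletCharacter ℂ 1) hx y
  simpa [DirichletCharacter.LFunctionTrivChar, DirichletCharacter.LFunction_modOne_eq] using h

lemma exists_norm_riemannZeta_one_add_le :
    ∃ K : ℝ, 1 ≤ K ∧ ∀ x : ℝ, 0 < x → x ≤ 1 → ‖riemannZeta (1 + x)‖ ≤ K / x := by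
  obtain ⟨K, hK⟩ := (isCompact_Icc (a := (0 : ℝ)) (b := 1)).exists_bound_of_continuousOn
    (f := fun x : ℝ => subOneMulZeta (1 + x))
    (differentiable_subOneMulZeta.continuous.comp (by fun_prop)).continuousOn
  refine ⟨max K 1, le_max_right _ _, fun x hx hx1 => ?_⟩
  have h := hK x ⟨hx.le, hx1⟩
  have hne : (1 + x : ℂ) ≠ 1 := by simpa using hx.ne'
  rw [subOneMulZeta_of_ne hne, norm_mul, add_sub_cancel_left, Complex.norm_real,
    Real.norm_of_nonneg hx.le] at h
  rw [le_div_iff₀ hx, mul_comm]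
  exact h.trans (le_max_left _ _)

lemma exists_norm_logDeriv_riemannZeta_le {ε : ℝ} (hε : 0 < ε) (hε' : ε ≤ 1 / 2) :
    ∃ c : ℝ, 0 < c ∧ c ≤ 1 / 2 ∧ ∀ s : ℂ, 2 ≤ |s.im| → 1 - c * |s.im| ^ (-(5 * ε)) ≤ s.re →
      s.re ≤ 2 → riemannZeta s ≠ 0 ∧
        ‖deriv riemannZeta s / riemannZeta s‖ ≤ |s.im| ^ (5 * ε) / c := by
  obtain ⟨C, hC1, hCε, hC⟩ := exists_norm_riemannZeta_deriv_le hε hε'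
  obtain ⟨K, hK1, hK⟩ := exists_norm_riemannZeta_one_add_le
  have hK3 : 1 ≤ K ^ 3 := one_le_pow₀ hK1
  refine ⟨1 / (256 * K ^ 3 * (2 * C) ^ 5), by positivity, ?_, fun s ht hs1 hs2 => ?_⟩
  · have h5 : 1 ≤ (2 * C) ^ 5 := one_le_pow₀ (by linarith)
    have : 1 ≤ K ^ 3 * (2 * C) ^ 5 := one_le_mul_of_one_le_of_one_le hK3 h5
    gcongr
    linarith
  set t := |s.im| with htdef
  have ht0 : 0 < t := by linarith
  set B := 2 * C * t ^ ε with hB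
  have htε : 1 ≤ t ^ ε := one_le_rpow (by linarith) hε.le
  have hBC : 2 * C ≤ B := le_mul_of_one_le_right (by linarith) htε
  have hB1 : 1 ≤ B := by linarith
  set τ := 1 / (256 * K ^ 3 * B ^ 5) with hτ
  have hpow : B ^ 5 = (2 * C) ^ 5 * t ^ (5 * ε) := by
    rw [hB, mul_pow, ← rpow_natCast (t ^ ε), ← rpow_mul ht0.le]
    norm_num [mul_comm]
  have hτ' : 1 / (256 * K ^ 3 * (2 * C) ^ 5) * t ^ (-(5 * ε)) = τ := by
    rw [hτ, hpow, rpow_neg ht0.le]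
    field_simp
  have hinv : t ^ (5 * ε) / (1 / (256 * K ^ 3 * (2 * C) ^ 5)) = 1 / τ := by
    rw [hτ, hpow]
    field_simp
  rw [hτ'] at hs1
  rw [hinv]
  have hB0 : 0 < B := by linarith
  have hτ0 : 0 < τ := by positivity
  have hτB : τ * (256 * K ^ 3 * B ^ 5) = 1 := by rw [hτ]; field_simp
  have hτε : τ ≤ ε / 4 := by
    have h4 : 4 / ε ≤ 256 * K ^ 3 * B ^ 5 := by
      have h5 : B ≤ B ^ 5 := le_self_pow₀ hB1 (by norm_num)
      have h6 : B ^ 5 ≤ K ^ 3 * B ^ 5 := le_mul_of_one_le_left (by positivity) hK3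
      have h7 : 4 / ε = 4 * (1 / ε) := by ring
      linarith
    rw [hτ, show ε / 4 = 1 / (4 / ε) by field_simp]
    exact one_div_le_one_div_of_le (by positivity) h4
  have hbd : ∀ z : ℂ, 1 - ε / 4 ≤ z.re → z.re ≤ 2 → (|z.im| = t ∨ |z.im| = 2 * t) →
      ‖riemannZeta z‖ ≤ B ∧ ‖deriv riemannZeta z‖ ≤ B := by
    intro z h1 h2 h3
    have h4 : 2 ≤ |z.im| ∧ |z.im| ≤ 2 * t := by rcases h3 with h | h <;> rw [h] <;> constructor <;> linarith
    have h5 : C * |z.im| ^ ε ≤ B := by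
      have : |z.im| ^ ε ≤ 2 * t ^ ε := by
        calc |z.im| ^ ε ≤ (2 * t) ^ ε := by gcongr; exact h4.2
          _ = 2 ^ ε * t ^ ε := mul_rpow (by norm_num) ht0.le
          _ ≤ 2 ^ (1 : ℝ) * t ^ ε := by
              gcongr
              · norm_num
              · linarith
          _ = _ := by rw [rpow_one]
      calc C * |z.im| ^ ε ≤ C * (2 * t ^ ε) := by gcongr
        _ = B := by rw [hB]; ring
    have h6 := hC z h1 h2 h4.1
    exact ⟨h6.1.trans h5, h6.2.trans h5⟩
  have hfar : ∀ z : ℂ, 1 + τ ≤ z.re → z.re ≤ 2 → z.im = s.im → 4 * τ * B ≤ ‖riemannZeta z‖ := by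
    intro z h1 h2 h3
    have hx0 : 0 < z.re - 1 := by linarith
    have hp := one_le_norm_riemannZeta_product hx0 z.im
    have e1 : (1 + ((z.re - 1 : ℝ) : ℂ) + Complex.I * z.im) = z := by
      apply Complex.ext <;> simp
    rw [e1] at hp
    have hb := (hbd (1 + ((z.re - 1 : ℝ) : ℂ) + 2 * Complex.I * z.im) (by simp; linarith)
      (by simp; linarith) (Or.inr (by simp [abs_mul, h3, htdef]))).1
    have hk := hK (z.re - 1) hx0 (by linarith)
    have hk' : ‖riemannZeta (1 + ((z.re - 1 : ℝ) : ℂ))‖ ≤ K / τ :=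
      hk.trans (by gcongr; linarith)
    have : 1 ≤ (K / τ) ^ 3 * ‖riemannZeta z‖ ^ 4 * B := hp.trans (by gcongr)
    have h4 : (4 * τ * B) ^ 4 ≤ ‖riemannZeta z‖ ^ 4 := by
      have h5 : (K / τ) ^ 3 * (4 * τ * B) ^ 4 * B = 1 := by
        rw [← hτB]; field_simp; ring
      rw [← h5] at this
      have h6 : 0 < (K / τ) ^ 3 := by positivity
      exact le_of_mul_le_mul_left (le_of_mul_le_mul_right this hB0) h6
    exact le_of_pow_le_pow_left₀ (by norm_num) (norm_nonneg _) h4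
  have hlow : 2 * τ * B ≤ ‖riemannZeta s‖ := by
    rcases le_total (1 + τ) s.re with h | h
    · have := hfar s h hs2 rfl
      have : 0 < τ * B := by positivity
      linarith
    · set w : ℂ := ⟨1 + τ, s.im⟩ with hw
      have hwz := hfar w le_rfl (by simp [hw]; linarith) rfl
      have hconv : Convex ℝ ({z : ℂ | 1 - ε / 4 ≤ z.re} ∩ {z : ℂ | z.re ≤ 2} ∩ {z : ℂ | z.im = s.im}) :=
        ((convex_halfSpace_re_ge _).inter (convex_halfSpace_re_le _)).inter
          (convex_hyperplane (IsLinearMap.mk Complex.add_im (by simp)) _)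
      have h1 := hconv.norm_image_sub_le_of_norm_deriv_le (𝕜 := ℂ) (f := riemannZeta) (C := B) (x := s) (y := w)
        (fun z hz => differentiableAt_riemannZeta (by
          rintro rfl
          have : (0 : ℝ) = s.im := by simpa using hz.2
          rw [htdef, ← this] at ht
          norm_num at ht))
        (fun z hz => (hbd z hz.1.1 hz.1.2 (Or.inl (by rw [hz.2]))).2)
        ⟨⟨by simp; linarith, hs2⟩, rfl⟩ ⟨⟨by simp [hw]; linarith, by simp [hw]; linarith⟩, rfl⟩
      have h2 : ‖w - s‖ ≤ 2 * τ := by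
        have : w - s = ((1 + τ - s.re : ℝ) : ℂ) := by apply Complex.ext <;> simp [hw]
        rw [this, Complex.norm_real, Real.norm_of_nonneg (by linarith)]
        linarith
      have h3 := norm_sub_norm_le (riemannZeta w) (riemannZeta s)
      have h4 : B * ‖w - s‖ ≤ B * (2 * τ) := by gcongr
      linarith
  have hpos : 0 < 2 * τ * B := by positivity
  refine ⟨norm_pos_iff.1 (hpos.trans_le hlow), ?_⟩
  rw [norm_div]
  calc ‖deriv riemannZeta s‖ / ‖riemannZeta s‖ ≤ B / (2 * τ * B) := by
        gcongr
        exact (hbd s (by linarith) hs2 (Or.inl rfl)).2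
    _ = 1 / 2 * (1 / τ) := by field_simp
    _ ≤ 1 / τ := by
        have : 0 < 1 / τ := by positivity
        linarith

/-- The Mellin transform of the smoothed error term in the prime number theorem. -/
noncomputable def psiErrorTransform (s : ℂ) : ℂ :=
  -(deriv subOneMulZeta s / subOneMulZeta s) / (s * (s + 1))

lemma logDeriv_subOneMulZeta {s : ℂ} (hs : s ≠ 1) (hζ : riemannZeta s ≠ 0) :
    deriv subOneMulZeta s / subOneMulZeta s =
      1 / (s - 1) + deriv riemannZeta s / riemannZeta s := by
  have h1 : s - 1 ≠ 0 := sub_ne_zero.2 hs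
  have hd : HasDerivAt (fun s => (s - 1) * riemannZeta s)
      (1 * riemannZeta s + (s - 1) * deriv riemannZeta s) s :=
    ((hasDerivAt_id s).sub_const 1).mul (differentiableAt_riemannZeta hs).hasDerivAt
  rw [(subOneMulZeta_eventuallyEq hs).deriv_eq, hd.deriv, subOneMulZeta_of_ne hs]
  field_simp

lemma isOpen_subOneMulZeta_ne_zero :
    IsOpen {s : ℂ | subOneMulZeta s ≠ 0 ∧ s * (s + 1) ≠ 0} :=
  (isOpen_ne_fun differentiable_subOneMulZeta.continuous continuous_const).inter
    (isOpen_ne_fun (by fun_prop) continuous_const)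

lemma differentiableOn_psiErrorTransform :
    DifferentiableOn ℂ psiErrorTransform {s : ℂ | subOneMulZeta s ≠ 0 ∧ s * (s + 1) ≠ 0} := by
  intro s hs
  have h1 : Differentiable ℂ (deriv subOneMulZeta) := fun z =>
    (differentiable_subOneMulZeta.analyticAt z).deriv.differentiableAt
  exact ((((h1 s).div (differentiable_subOneMulZeta s) hs.1).neg).div
    (differentiableAt_id.mul (differentiableAt_id.add_const 1)) hs.2).differentiableWithinAt

lemma mem_of_one_le_re {s : ℂ} (hs : 1 ≤ s.re) :
    s ∈ {s : ℂ | subOneMulZeta s ≠ 0 ∧ s * (s + 1) ≠ 0} := by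
  refine ⟨subOneMulZeta_ne_zero hs, mul_ne_zero ?_ ?_⟩ <;> intro h <;>
    have h' := congrArg Complex.re h <;> simp at h' <;> linarith

lemma continuousOn_deriv_deriv_psiErrorTransform :
    ContinuousOn (deriv (deriv psiErrorTransform))
      {s : ℂ | subOneMulZeta s ≠ 0 ∧ s * (s + 1) ≠ 0} :=
  ((differentiableOn_psiErrorTransform.deriv isOpen_subOneMulZeta_ne_zero).deriv
    isOpen_subOneMulZeta_ne_zero).continuousOn

lemma exists_norm_deriv_deriv_psiErrorTransform_le_of_three_le :
    ∃ C : ℝ, 0 < C ∧ ∀ s : ℂ, 1 ≤ s.re → s.re ≤ 3 / 2 → 3 ≤ |s.im| →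
      ‖deriv (deriv psiErrorTransform) s‖ ≤ C * |s.im| ^ (-(3 / 2) : ℝ) := by
  obtain ⟨c, hc0, hc2, hc⟩ := exists_norm_logDeriv_riemannZeta_le (ε := 1 / 30) (by norm_num)
    (by norm_num)
  norm_num only at hc
  refine ⟨32 / c ^ 3, by positivity, fun s hs1 hs2 ht => ?_⟩
  set t := |s.im| with htdef
  have ht0 : 0 < t := by linarith
  set q := (2 * t) ^ (1 / 6 : ℝ) with hq
  have hq1 : 1 ≤ q := one_le_rpow (by linarith) (by norm_num)
  set r := c / q with hr
  have hr0 : 0 < r := by positivity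
  have hrc : r ≤ c := div_le_self hc0.le hq1
  have hbound : ∀ z ∈ Metric.closedBall s r, (subOneMulZeta z ≠ 0 ∧ z * (z + 1) ≠ 0) ∧
      ‖psiErrorTransform z‖ ≤ 8 / (r * t ^ 2) := by
    intro z hz
    rw [Metric.mem_closedBall, dist_eq_norm] at hz
    have hre : |z.re - s.re| ≤ r := by simpa using (Complex.abs_re_le_norm (z - s)).trans hz
    have him : |z.im - s.im| ≤ r := by simpa using (Complex.abs_im_le_norm (z - s)).trans hz
    have h2 := abs_sub_abs_le_abs_sub z.im s.im
    have h3 := abs_sub_abs_le_abs_sub s.im z.im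
    rw [abs_sub_comm] at h3
    rw [abs_le] at hre
    have ht1 : 2 ≤ |z.im| := by linarith
    have ht2 : |z.im| ≤ 2 * t := by linarith
    have ht3 : t / 2 ≤ |z.im| := by linarith
    have hqz : |z.im| ^ (1 / 6 : ℝ) ≤ q := by rw [hq]; gcongr
    have hqz0 : 0 < |z.im| ^ (1 / 6 : ℝ) := rpow_pos_of_pos (by linarith) _
    obtain ⟨hζ, hL⟩ := hc z ht1 (by
      have : r ≤ c * |z.im| ^ (-(1 / 6) : ℝ) := by
        rw [rpow_neg (abs_nonneg _), ← div_eq_mul_inv, hr]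
        gcongr
      norm_num only at this ⊢
      linarith) (by linarith)
    have hz1 : z ≠ 1 := by rintro rfl; norm_num at ht1
    have hn1 : 1 ≤ ‖z - 1‖ := by
      have := Complex.abs_im_le_norm (z - 1)
      simp at this
      linarith
    have hn2 : |z.im| ≤ ‖z‖ := Complex.abs_im_le_norm z
    have hn3 : |z.im| ≤ ‖z + 1‖ := by simpa using Complex.abs_im_le_norm (z + 1)
    have hz0 : z * (z + 1) ≠ 0 := by
      refine mul_ne_zero (norm_pos_iff.1 (by linarith)) (norm_pos_iff.1 (by linarith))
    refine ⟨⟨?_, hz0⟩, ?_⟩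
    · rw [subOneMulZeta_of_ne hz1]
      exact mul_ne_zero (sub_ne_zero.2 hz1) hζ
    · rw [psiErrorTransform, norm_div, norm_neg, logDeriv_subOneMulZeta hz1 hζ, norm_mul]
      have hP : ‖1 / (z - 1) + deriv riemannZeta z / riemannZeta z‖ ≤ 2 / r := by
        refine (norm_add_le _ _).trans ?_
        have e1 : ‖1 / (z - 1)‖ ≤ 1 := by
          rw [norm_div, norm_one]
          exact div_le_one_of_le₀ hn1 (by positivity)
        have e2 : 1 ≤ 1 / r := (one_le_div hr0).2 (by linarith)
        have e3 : |z.im| ^ (1 / 6 : ℝ) / c ≤ 1 / r := by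
          rw [hr, one_div_div]
          gcongr
        have e4 : 2 / r = 1 / r + 1 / r := by ring
        linarith
      have hden : t ^ 2 / 4 ≤ ‖z‖ * ‖z + 1‖ := by
        calc t ^ 2 / 4 = (t / 2) * (t / 2) := by ring
          _ ≤ _ := by gcongr <;> linarith
      calc _ ≤ (2 / r) / (t ^ 2 / 4) := by gcongr
        _ = _ := by field_simp; norm_num
  have hcauchy := Complex.norm_iteratedDeriv_le_of_forall_mem_sphere_norm_le 2
    (f := psiErrorTransform) (c := s) hr0
    (DifferentiableOn.diffContOnCl_ball (U := Metric.closedBall s r)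
      (differentiableOn_psiErrorTransform.mono fun z hz => (hbound z hz).1) le_rfl)
    (fun z hz => (hbound z (Metric.sphere_subset_closedBall hz)).2)
  rw [iteratedDeriv_succ, iteratedDeriv_one] at hcauchy
  refine hcauchy.trans ?_
  have hq3 : q ^ 3 ≤ 2 * t ^ (1 / 2 : ℝ) := by
    rw [hq, ← rpow_natCast, ← rpow_mul (by linarith)]
    norm_num only
    rw [mul_rpow (by norm_num) ht0.le]
    gcongr
    calc (2 : ℝ) ^ (1 / 2 : ℝ) ≤ 2 ^ (1 : ℝ) := by gcongr <;> norm_num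
      _ = 2 := rpow_one _
  have hexp : t ^ (1 / 2 : ℝ) / t ^ 2 = t ^ (-(3 / 2) : ℝ) := by
    rw [← rpow_natCast t 2, ← rpow_sub ht0]
    norm_num
  calc ((2).factorial : ℝ) * (8 / (r * t ^ 2)) / r ^ 2 = 16 / c ^ 3 * (q ^ 3 / t ^ 2) := by
        rw [hr]
        field_simp
        norm_num [Nat.factorial]
    _ ≤ 16 / c ^ 3 * (2 * t ^ (1 / 2 : ℝ) / t ^ 2) := by gcongr
    _ = _ := by rw [← hexp]; ring

lemma exists_norm_deriv_deriv_psiErrorTransform_le :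
    ∃ C : ℝ, 0 < C ∧ ∀ s : ℂ, 1 ≤ s.re → s.re ≤ 3 / 2 →
      ‖deriv (deriv psiErrorTransform) s‖ ≤ C * (1 + s.im ^ 2) ^ (-(3 / 2) / 2 : ℝ) := by
  obtain ⟨C, hC0, hC⟩ := exists_norm_deriv_deriv_psiErrorTransform_le_of_three_le
  obtain ⟨M, hM⟩ := ((isCompact_Icc (a := (1 : ℝ)) (b := 3 / 2)).reProdIm
    (isCompact_Icc (a := (-3 : ℝ)) (b := 3))).exists_bound_of_continuousOn
    (f := deriv (deriv psiErrorTransform))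
    (continuousOn_deriv_deriv_psiErrorTransform.mono fun s hs => mem_of_one_le_re hs.1.1)
  refine ⟨10 * |M| + 2 * C, by positivity, fun s hs1 hs2 => ?_⟩
  have hw : 0 < (1 + s.im ^ 2) ^ (-(3 / 2) / 2 : ℝ) := by positivity
  rcases le_total |s.im| 3 with h | h
  · have h1 := (hM s ⟨⟨hs1, hs2⟩, abs_le.1 h⟩).trans (le_abs_self M)
    have h2 : 1 / 10 ≤ (1 + s.im ^ 2) ^ (-(3 / 2) / 2 : ℝ) := by
      have h3 : 1 + s.im ^ 2 ≤ 10 := by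
        have := sq_le_sq' (by linarith [abs_nonneg s.im]) h
        rw [sq_abs] at this
        linarith
      calc (1 / 10 : ℝ) = 10 ^ (-1 : ℝ) := by norm_num [rpow_neg_one]
        _ ≤ 10 ^ (-(3 / 2) / 2 : ℝ) := rpow_le_rpow_of_exponent_le (by norm_num) (by norm_num)
        _ ≤ _ := rpow_le_rpow_of_nonpos (by positivity) h3 (by norm_num)
    have h3 : |M| * (1 / 10) ≤ |M| * (1 + s.im ^ 2) ^ (-(3 / 2) / 2 : ℝ) := by gcongr
    have : 0 < C * (1 + s.im ^ 2) ^ (-(3 / 2) / 2 : ℝ) := by positivity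
    linarith
  · have h1 := hC s hs1 hs2 h
    have h2 : |s.im| ^ (-(3 / 2) : ℝ) ≤ 2 * (1 + s.im ^ 2) ^ (-(3 / 2) / 2 : ℝ) := by
      have ht0 : 0 < |s.im| := by linarith
      have h3 : (1 + s.im ^ 2) ≤ 2 * s.im ^ 2 := by
        have := pow_le_pow_left₀ (by norm_num) h 2
        rw [sq_abs] at this
        linarith
      have hs0 : 0 < s.im ^ 2 := by rw [← sq_abs]; positivity
      calc |s.im| ^ (-(3 / 2) : ℝ) = (s.im ^ 2) ^ (-(3 / 2) / 2 : ℝ) := by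
            rw [← sq_abs, ← rpow_natCast |s.im| 2, ← rpow_mul ht0.le]
            norm_num
        _ ≤ 2 * (2 * s.im ^ 2) ^ (-(3 / 2) / 2 : ℝ) := by
            rw [mul_rpow (by norm_num) hs0.le, ← mul_assoc]
            refine le_mul_of_one_le_left (by positivity) ?_
            rw [← rpow_one_add' (by norm_num) (by norm_num)]
            exact one_le_rpow (by norm_num) (by norm_num)
        _ ≤ _ := by
            gcongr 2 * ?_
            exact rpow_le_rpow_of_nonpos (by positivity) h3 (by norm_num)
    have h3 : C * |s.im| ^ (-(3 / 2) : ℝ) ≤ C * (2 * (1 + s.im ^ 2) ^ (-(3 / 2) / 2 : ℝ)) := by gcongr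
    have : 0 ≤ 10 * |M| * (1 + s.im ^ 2) ^ (-(3 / 2) / 2 : ℝ) := by positivity
    linarith

open MeasureTheory in
lemma HasMellin.congr {f g : ℝ → ℂ} {s m : ℂ} (hf : HasMellin f s m)
    (hfg : Set.EqOn f g (Set.Ioi 0)) : HasMellin g s m := by
  have h : Set.EqOn (fun t : ℝ => (t : ℂ) ^ (s - 1) • f t) (fun t : ℝ => (t : ℂ) ^ (s - 1) • g t)
      (Set.Ioi 0) := fun t ht => by simp only [hfg ht]
  exact ⟨hf.1.congr_fun h measurableSet_Ioi,
    (setIntegral_congr_fun measurableSet_Ioi h).symm.trans hf.2⟩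

open MeasureTheory in
/-- The Mellin transform of `t ↦ ∑ a n φ (n t)` is the product of the Dirichlet series of `a` and
the Mellin transform of `φ`. -/
lemma mellin_tsum_mul_comp_mul_left {φ : ℝ → ℂ} {a : ℕ → ℂ} {s : ℂ} (ha : LSeriesSummable a s)
    (ha0 : a 0 = 0) (hφ : MellinConvergent φ s) :
    mellin (fun t => ∑' n : ℕ, a n * φ (n * t)) s = LSeries a s * mellin φ s := by
  have hmel : ∀ n : ℕ, ∫ t : ℝ in Set.Ioi 0, (t : ℂ) ^ (s - 1) • (a n * φ (n * t)) =
      LSeries.term a s n * mellin φ s := by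
    intro n
    rcases Nat.eq_zero_or_pos n with rfl | hn
    · simp [ha0]
    · have h := mellin_comp_mul_left φ s (a := n) (by positivity)
      have h' := mellin_const_smul (fun t : ℝ => φ (n * t)) s (a n)
      simp only [smul_eq_mul] at h h'
      rw [h] at h'
      rw [LSeries.term_of_ne_zero hn.ne']
      refine h'.trans ?_
      rw [Complex.cpow_neg]
      push_cast
      ring
  have hint : ∀ n : ℕ, IntegrableOn (fun t : ℝ => (t : ℂ) ^ (s - 1) • (a n * φ (n * t)))
      (Set.Ioi 0) := by
    intro n
    rcases Nat.eq_zero_or_pos n with rfl | hn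
    · simp [ha0]
    · exact ((MellinConvergent.comp_mul_left (a := n) (by positivity)).2 hφ).const_smul (a n)
  have hnorm : ∀ n : ℕ, ∫ t : ℝ in Set.Ioi 0, ‖(t : ℂ) ^ (s - 1) • (a n * φ (n * t))‖ =
      ‖LSeries.term a s n‖ * ∫ t : ℝ in Set.Ioi 0, ‖(t : ℂ) ^ (s - 1) • φ t‖ := by
    intro n
    rcases Nat.eq_zero_or_pos n with rfl | hn
    · simp [ha0]
    · have hn0 : (0 : ℝ) < n := by positivity
      have h := integral_comp_mul_left_Ioi (fun t : ℝ => ‖(t : ℂ) ^ (s - 1) • φ t‖) 0 hn0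
      rw [mul_zero, smul_eq_mul, eq_inv_mul_iff_mul_eq₀ hn0.ne'] at h
      rw [← h, LSeries.term_of_ne_zero hn.ne', ← mul_assoc, ← integral_const_mul]
      refine setIntegral_congr_fun measurableSet_Ioi fun t ht => ?_
      have ht : 0 < t := ht
      simp only [norm_smul, norm_mul, norm_div]
      rw [Complex.norm_cpow_eq_rpow_re_of_pos ht,
        Complex.norm_cpow_eq_rpow_re_of_pos (mul_pos hn0 ht), Complex.norm_natCast_cpow_of_pos hn,
        mul_rpow hn0.le ht.le]
      simp only [Complex.sub_re, Complex.one_re]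
      rw [rpow_sub_one hn0.ne']
      field_simp
  have hsum : Summable fun n : ℕ =>
      ∫ t : ℝ in Set.Ioi 0, ‖(t : ℂ) ^ (s - 1) • (a n * φ (n * t))‖ := by
    simp_rw [hnorm]
    exact ha.norm.mul_right _
  have h := hasSum_integral_of_summable_integral_norm hint hsum
  simp_rw [hmel] at h
  rw [LSeries, ← tsum_mul_right, h.tsum_eq, mellin]
  simp_rw [smul_eq_mul, tsum_mul_left]

lemma hasMellin_max_one_sub {s : ℂ} (hs : 0 < s.re) :
    HasMellin (fun t : ℝ => ((max 0 (1 - t) : ℝ) : ℂ)) s (1 / (s * (s + 1))) := by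
  have h1 := hasMellin_one_Ioc hs
  have h2 := hasMellin_cpow_Ioc 1 (s := s) (by simp; linarith)
  have h3 := hasMellin_sub h1.1 h2.1
  rw [h1.2, h2.2] at h3
  have hs0 : s ≠ 0 := by rintro rfl; simp at hs
  have hs1 : s + 1 ≠ 0 := by
    intro h; have := congrArg Complex.re h; simp at this; linarith
  rw [show 1 / (s * (s + 1)) = 1 / s - 1 / (s + 1) by field_simp; ring]
  refine h3.congr fun t ht => ?_
  have ht : 0 < t := ht
  by_cases h : t ≤ 1
  · simp [Set.indicator, ht, h]
  · simp [Set.indicator, ht, h, (not_le.1 h).le]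

lemma hasMellin_max_one_sub_sq_div {s : ℂ} (hs : 1 < s.re) :
    HasMellin (fun t : ℝ => ((max 0 (1 - t) ^ 2 / (2 * t) : ℝ) : ℂ)) s
      (1 / ((s - 1) * s * (s + 1))) := by
  have h1 := hasMellin_one_Ioc (s := s) (by linarith)
  have h2 := hasMellin_cpow_Ioc 1 (s := s) (by simp; linarith)
  have h3 := hasMellin_cpow_Ioc (-1) (s := s) (by simp; linarith)
  have h4 := hasMellin_add (h2.1.const_smul (1 / 2 : ℂ)) (h3.1.const_smul (1 / 2 : ℂ))
  have h5 := hasMellin_sub h4.1 h1.1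
  rw [h4.2, mellin_const_smul, mellin_const_smul, h1.2, h2.2, h3.2] at h5
  have hs0 : s ≠ 0 := by rintro rfl; simp at hs; linarith
  have hs1 : s + 1 ≠ 0 := by
    intro h; have := congrArg Complex.re h; simp at this; linarith
  have hs2 : s - 1 ≠ 0 := by
    intro h; have := congrArg Complex.re h; simp at this; linarith
  rw [show 1 / ((s - 1) * s * (s + 1)) =
    (1 / 2 : ℂ) • (1 / (s + 1)) + (1 / 2 : ℂ) • (1 / (s + -1)) - 1 / s by
      rw [← sub_eq_add_neg, smul_eq_mul, smul_eq_mul]; field_simp; ring]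
  refine h5.congr fun t ht => ?_
  have ht : 0 < t := ht
  have ht' : (t : ℂ) ≠ 0 := by exact_mod_cast ht.ne'
  by_cases h : t ≤ 1
  · simp [Set.indicator, ht, h, Complex.cpow_neg]
    field_simp
    ring
  · simp [Set.indicator, ht, h, (not_le.1 h).le]

lemma one_sub_natCast_mul_nonpos {y : ℝ} (hy : 0 < y) {n : ℕ} (hn : ⌊1 / y⌋₊ < n) :
    1 - n * y ≤ 0 := by
  have := (Nat.floor_lt (by positivity)).1 hn
  rw [div_lt_iff₀ hy] at this
  linarith

/-- The smoothed Chebyshev function `∑ n, Λ n * (1 - n * y)⁺`. -/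
noncomputable def psiSmooth (y : ℝ) : ℝ := ∑' n : ℕ, Λ n * max 0 (1 - n * y)

lemma psiSmooth_eq_sum {y : ℝ} (hy : 0 < y) {N : ℕ} (hN : ⌊1 / y⌋₊ ≤ N) :
    psiSmooth y = ∑ n ∈ Finset.Ioc 0 N, Λ n * max 0 (1 - n * y) := by
  refine tsum_eq_sum fun n hn => ?_
  rw [Finset.mem_Ioc, not_and_or, not_lt, not_le] at hn
  rcases hn with hn | hn
  · simp [Nat.le_zero.1 hn]
  · rw [max_eq_left (one_sub_natCast_mul_nonpos hy (hN.trans_lt hn)), mul_zero]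

lemma psiSmooth_nonneg (y : ℝ) : 0 ≤ psiSmooth y :=
  tsum_nonneg fun _ => mul_nonneg vonMangoldt_nonneg (le_max_left _ _)

lemma psiSmooth_le {y : ℝ} (hy : 0 < y) : psiSmooth y ≤ (Real.log 4 + 4) / y := by
  rw [psiSmooth_eq_sum hy le_rfl]
  calc ∑ n ∈ Finset.Ioc 0 ⌊1 / y⌋₊, Λ n * max 0 (1 - n * y)
      ≤ ∑ n ∈ Finset.Ioc 0 ⌊1 / y⌋₊, Λ n := by
        refine Finset.sum_le_sum fun n _ => mul_le_of_le_one_right vonMangoldt_nonneg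
          (max_le zero_le_one ?_)
        have : 0 ≤ n * y := by positivity
        linarith
    _ ≤ (Real.log 4 + 4) * (1 / y) := Chebyshev.psi_le_const_mul_self (by positivity)
    _ = (Real.log 4 + 4) / y := by ring

lemma psiSmooth_eq_zero {y : ℝ} (hy : 1 ≤ y) : psiSmooth y = 0 := by
  rw [psiSmooth_eq_sum (by linarith) (N := 1)
    (Nat.floor_le_one_of_le_one ((div_le_one (by linarith)).2 hy))]
  simp

lemma continuousAt_psiSmooth {y : ℝ} (hy : 0 < y) : ContinuousAt psiSmooth y := by
  have h : (fun z => ∑ n ∈ Finset.Ioc 0 ⌊1 / (y / 2)⌋₊, Λ n * max 0 (1 - n * z)) =ᶠ[nhds y]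
      psiSmooth := by
    filter_upwards [lt_mem_nhds (half_lt_self hy)] with z hz
    exact (psiSmooth_eq_sum (by linarith) (Nat.floor_le_floor (by gcongr))).symm
  exact ContinuousAt.congr (by fun_prop) h

/-- The difference between `psiSmooth` and its main term. -/
noncomputable def psiSmoothError (y : ℝ) : ℝ := psiSmooth y - max 0 (1 - y) ^ 2 / (2 * y)

lemma abs_psiSmoothError_le {y : ℝ} (hy : 0 < y) : |psiSmoothError y| ≤ (Real.log 4 + 5) / y := by
  have h1 := psiSmooth_le hy
  have h2 := psiSmooth_nonneg y
  have h3 : max 0 (1 - y) ^ 2 / (2 * y) ≤ 1 / y := by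
    have : max 0 (1 - y) ^ 2 ≤ 1 := pow_le_one₀ (le_max_left _ _) (max_le zero_le_one (by linarith))
    rw [div_le_div_iff₀ (by positivity) hy]
    nlinarith
  have h4 : 0 ≤ max 0 (1 - y) ^ 2 / (2 * y) := by positivity
  have h5 : 0 ≤ (Real.log 4 + 4) / y := div_nonneg (by have := Real.log_nonneg (x := 4) (by norm_num); linarith) hy.le
  rw [show (Real.log 4 + 5) / y = (Real.log 4 + 4) / y + 1 / y by ring, psiSmoothError, abs_le]
  constructor <;> linarith [one_div_pos.2 hy]

lemma psiSmoothError_eq_zero {y : ℝ} (hy : 1 ≤ y) : psiSmoothError y = 0 := by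
  rw [psiSmoothError, psiSmooth_eq_zero hy, max_eq_left (by linarith)]
  simp

lemma continuousAt_psiSmoothError {y : ℝ} (hy : 0 < y) : ContinuousAt psiSmoothError y :=
  (continuousAt_psiSmooth hy).sub (ContinuousAt.div (by fun_prop) (by fun_prop) (by positivity))

lemma isBigO_psiSmooth_nhdsGT_zero :
    (fun y => (psiSmooth y : ℂ)) =O[nhdsWithin 0 (Set.Ioi 0)] (· ^ (-1 : ℝ)) := by
  refine Asymptotics.IsBigO.of_bound (Real.log 4 + 4) ?_
  filter_upwards [self_mem_nhdsWithin] with y (hy : 0 < y)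
  rw [Complex.norm_of_nonneg (psiSmooth_nonneg y), rpow_neg_one, Real.norm_of_nonneg (by positivity),
    ← div_eq_mul_inv]
  exact psiSmooth_le hy

lemma isBigO_psiSmoothError_nhdsGT_zero :
    (fun y => (psiSmoothError y : ℂ)) =O[nhdsWithin 0 (Set.Ioi 0)] (· ^ (-1 : ℝ)) := by
  refine Asymptotics.IsBigO.of_bound (Real.log 4 + 5) ?_
  filter_upwards [self_mem_nhdsWithin] with y (hy : 0 < y)
  rw [Complex.norm_real, rpow_neg_one, Real.norm_of_nonneg (by positivity : 0 ≤ y⁻¹),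
    ← div_eq_mul_inv]
  exact abs_psiSmoothError_le hy

lemma mellin_psiSmoothError {s : ℂ} (hs : 1 < s.re) :
    mellin (fun y => (psiSmoothError y : ℂ)) s = psiErrorTransform s := by
  have hconv : MellinConvergent (fun y => (psiSmooth y : ℂ)) s := by
    refine mellinConvergent_of_isBigO_rpow (a := s.re + 1) (b := 1) ?_ ?_ (by linarith)
      isBigO_psiSmooth_nhdsGT_zero hs
    · refine ContinuousOn.locallyIntegrableOn (fun y hy => ?_) measurableSet_Ioi
      exact (Complex.continuous_ofReal.continuousAt.comp
        (continuousAt_psiSmooth hy)).continuousWithinAt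
    · refine (Asymptotics.isBigO_zero _ _).congr' ?_ EventuallyEq.rfl
      filter_upwards [eventually_ge_atTop 1] with y hy
      simp [psiSmooth_eq_zero hy]
  have hmel : mellin (fun y => (psiSmooth y : ℂ)) s =
      (-deriv riemannZeta s / riemannZeta s) * (1 / (s * (s + 1))) := by
    rw [← LSeries_vonMangoldt_eq_deriv_riemannZeta_div hs,
      ← (hasMellin_max_one_sub (by linarith : 0 < s.re)).2,
      ← mellin_tsum_mul_comp_mul_left (LSeriesSummable_vonMangoldt hs) (by simp)
        (hasMellin_max_one_sub (by linarith)).1]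
    congr 1
    ext y
    rw [psiSmooth, Complex.ofReal_tsum]
    push_cast
    rfl
  have h := hasMellin_sub hconv (hasMellin_max_one_sub_sq_div hs).1
  rw [hmel, (hasMellin_max_one_sub_sq_div hs).2] at h
  have hs1 : s ≠ 1 := by rintro rfl; simp at hs
  have h0 := (mem_of_one_le_re hs.le).2
  have hs2 : s - 1 ≠ 0 := sub_ne_zero.2 hs1
  have hz := riemannZeta_ne_zero_of_one_le_re hs.le
  rw [psiErrorTransform, logDeriv_subOneMulZeta hs1 hz]
  simp only [psiSmoothError, Complex.ofReal_sub]
  rw [h.2]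
  have h1 := left_ne_zero_of_mul h0
  have h2 := right_ne_zero_of_mul h0
  field_simp
  ring

lemma hasMellin_log_smul {f : ℝ → ℂ} {g : ℂ → ℂ} {b : ℝ} (hfc : ContinuousOn f (Set.Ioi 0))
    (hf_top : ∀ y, 1 ≤ y → f y = 0) (hf_bot : f =O[nhdsWithin 0 (Set.Ioi 0)] (· ^ (-b)))
    (hg : ∀ s : ℂ, b < s.re → mellin f s = g s) {s : ℂ} (hs : b < s.re) :
    HasMellin (fun y : ℝ => Real.log y • f y) s (deriv g s) := by
  have h := mellin_hasDerivAt_of_isBigO_rpow (a := s.re + 1) (s := s)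
    (hfc.locallyIntegrableOn measurableSet_Ioi) ?_ (by linarith) hf_bot hs
  · refine ⟨h.1, ?_⟩
    rw [← h.2.deriv]
    refine EventuallyEq.deriv_eq ?_
    filter_upwards [(isOpen_lt continuous_const Complex.continuous_re).mem_nhds hs] with z hz
    exact hg z hz
  · refine (Asymptotics.isBigO_zero _ _).congr' ?_ EventuallyEq.rfl
    filter_upwards [eventually_ge_atTop 1] with y hy
    exact (hf_top y hy).symm

lemma hasMellin_log_sq_psiSmoothError {s : ℂ} (hs : 1 < s.re) :
    HasMellin (fun y : ℝ => Real.log y • Real.log y • (psiSmoothError y : ℂ)) s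
      (deriv (deriv psiErrorTransform) s) := by
  have hc : ContinuousOn (fun y => (psiSmoothError y : ℂ)) (Set.Ioi 0) := fun y hy =>
    (Complex.continuous_ofReal.continuousAt.comp
      (continuousAt_psiSmoothError hy)).continuousWithinAt
  have htop : ∀ y : ℝ, 1 ≤ y → (psiSmoothError y : ℂ) = 0 := fun y hy => by
    simp [psiSmoothError_eq_zero hy]
  obtain ⟨b, hb1, hbs⟩ := exists_between hs
  refine hasMellin_log_smul (b := b) ?_ (fun y hy => by simp [htop y hy])
    (isBigO_rpow_zero_log_smul hb1 isBigO_psiSmoothError_nhdsGT_zero) (fun z hz => ?_) hbs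
  · exact (continuousOn_log.mono fun y (hy : 0 < y) => hy.ne').smul hc
  · exact (hasMellin_log_smul hc htop isBigO_psiSmoothError_nhdsGT_zero
      (fun z hz => mellin_psiSmoothError hz) (hb1.trans hz)).2

open MeasureTheory in
lemma exists_abs_psiSmoothError_le : ∃ C : ℝ, 0 < C ∧ ∀ y : ℝ, 0 < y →
    Real.log y ^ 2 * |psiSmoothError y| ≤ C / y := by
  obtain ⟨C, hC0, hC⟩ := exists_norm_deriv_deriv_psiErrorTransform_le
  have hint : Integrable fun t : ℝ => C * (1 + t ^ 2) ^ (-(3 / 2) / 2 : ℝ) := by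
    have := integrable_rpow_neg_one_add_norm_sq (E := ℝ) (μ := volume) (r := 3 / 2)
      (by simp; norm_num)
    simp only [Real.norm_eq_abs, sq_abs] at this
    exact this.const_mul C
  set K : ℝ := ∫ t : ℝ, C * (1 + t ^ 2) ^ (-(3 / 2) / 2 : ℝ) with hK
  have hK0 : 0 ≤ K := integral_nonneg fun t => by positivity
  refine ⟨K + 1, by positivity, fun y hy => ?_⟩
  have hmain : ∀ σ : ℝ, 1 < σ → σ ≤ 3 / 2 →
      Real.log y ^ 2 * |psiSmoothError y| ≤ y ^ (-σ) * K := by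
    intro σ hσ1 hσ2
    set f : ℝ → ℂ := fun y => Real.log y • Real.log y • (psiSmoothError y : ℂ) with hf
    have hre : ∀ t : ℝ, ((σ : ℂ) + t * Complex.I).re = σ := fun t => by simp
    have him : ∀ t : ℝ, ((σ : ℂ) + t * Complex.I).im = t := fun t => by simp
    have hmel : ∀ t : ℝ, mellin f (σ + t * Complex.I) =
        deriv (deriv psiErrorTransform) (σ + t * Complex.I) := fun t =>
      (hasMellin_log_sq_psiSmoothError (by rw [hre]; exact hσ1)).2
    have hbound : ∀ t : ℝ, ‖mellin f (σ + t * Complex.I)‖ ≤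
        C * (1 + t ^ 2) ^ (-(3 / 2) / 2 : ℝ) := fun t => by
      have := hC (σ + t * Complex.I) (by rw [hre]; exact hσ1.le) (by rw [hre]; exact hσ2)
      rwa [him, ← hmel] at this
    have hvert : Complex.VerticalIntegrable (mellin f) σ := by
      refine hint.mono' ?_ (Eventually.of_forall hbound)
      refine Continuous.aestronglyMeasurable ?_
      simp_rw [hmel]
      exact continuousOn_deriv_deriv_psiErrorTransform.comp_continuous (by fun_prop)
        fun t => mem_of_one_le_re (by rw [hre]; exact hσ1.le)
    have hcont : ContinuousAt f y :=
      (continuousAt_log hy.ne').smul ((continuousAt_log hy.ne').smul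
        (Complex.continuous_ofReal.continuousAt.comp (continuousAt_psiSmoothError hy)))
    have hinv := mellinInv_mellin_eq σ f hy
      (hasMellin_log_sq_psiSmoothError (by simpa using hσ1)).1 hvert hcont
    have hnorm : ‖f y‖ = Real.log y ^ 2 * |psiSmoothError y| := by
      rw [hf, norm_smul, norm_smul, Complex.norm_real, Real.norm_eq_abs, Real.norm_eq_abs,
        ← mul_assoc, ← pow_two, sq_abs]
    rw [← hnorm, ← hinv, mellinInv, norm_smul]
    have h1 : ‖(1 / (2 * π) : ℝ)‖ ≤ 1 := by
      rw [Real.norm_of_nonneg (by positivity), div_le_one (by positivity)]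
      linarith [pi_gt_three]
    refine (mul_le_of_le_one_left (norm_nonneg _) h1).trans ?_
    rw [hK, ← integral_const_mul]
    refine norm_integral_le_of_norm_le (hint.const_mul _) (Eventually.of_forall fun t => ?_)
    rw [norm_smul, Complex.norm_cpow_eq_rpow_re_of_pos hy, Complex.neg_re, hre]
    gcongr
    exact hbound t
  have hlim : Tendsto (fun σ : ℝ => y ^ (-σ) * K) (nhdsWithin 1 (Set.Ioi 1))
      (nhds (y ^ (-1 : ℝ) * K)) := by
    refine Tendsto.mono_left ?_ nhdsWithin_le_nhds
    exact ((continuous_const.rpow continuous_neg fun _ => Or.inl hy.ne').mul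
      continuous_const).tendsto 1
  have h := ge_of_tendsto hlim (b := Real.log y ^ 2 * |psiSmoothError y|) (by
    filter_upwards [Ioc_mem_nhdsGT (by norm_num : (1 : ℝ) < 3 / 2)] with σ hσ
    exact hmain σ hσ.1 hσ.2)
  refine h.trans ?_
  rw [rpow_neg_one, div_eq_inv_mul]
  gcongr
  linarith

lemma mul_psiSmooth_inv_eq_sum {x : ℝ} (hx : 0 < x) {N : ℕ} (hN : ⌊x⌋₊ ≤ N) :
    x * psiSmooth x⁻¹ = ∑ n ∈ Finset.Ioc 0 N, Λ n * max 0 (x - n) := by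
  rw [psiSmooth_eq_sum (N := N) (inv_pos.2 hx) (by rwa [one_div, inv_inv]), Finset.mul_sum]
  refine Finset.sum_congr rfl fun n _ => ?_
  rw [mul_left_comm, mul_max_of_nonneg _ _ hx.le, mul_zero]
  field_simp

lemma psi_mul_sub_le {x y : ℝ} (hx : 0 < x) (hy : 0 < y) :
    Chebyshev.psi x * (y - x) ≤ y * psiSmooth y⁻¹ - x * psiSmooth x⁻¹ := by
  rw [mul_psiSmooth_inv_eq_sum hx (le_max_left _ ⌊y⌋₊),
    mul_psiSmooth_inv_eq_sum hy (le_max_right ⌊x⌋₊ _), ← Finset.sum_sub_distrib, Chebyshev.psi,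
    Finset.sum_mul]
  have hsub : Finset.Ioc 0 ⌊x⌋₊ ⊆ Finset.Ioc 0 (max ⌊x⌋₊ ⌊y⌋₊) :=
    Finset.Ioc_subset_Ioc_right (le_max_left _ _)
  calc ∑ n ∈ Finset.Ioc 0 ⌊x⌋₊, Λ n * (y - x)
      ≤ ∑ n ∈ Finset.Ioc 0 ⌊x⌋₊, (Λ n * max 0 (y - n) - Λ n * max 0 (x - n)) := by
        refine Finset.sum_le_sum fun n hn => ?_
        have hn' : (n : ℝ) ≤ x := (Nat.le_floor_iff hx.le).1 (Finset.mem_Ioc.1 hn).2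
        rw [← mul_sub, max_eq_right (sub_nonneg.2 hn')]
        have := le_max_right 0 (y - n)
        exact mul_le_mul_of_nonneg_left (by linarith) vonMangoldt_nonneg
    _ ≤ _ := by
        refine Finset.sum_le_sum_of_subset_of_nonneg hsub fun n hn hn' => ?_
        have hn'' : x < n := by
          refine (Nat.floor_lt hx.le).1 (not_le.1 fun h => hn' ?_)
          exact Finset.mem_Ioc.2 ⟨(Finset.mem_Ioc.1 hn).1, h⟩
        rw [max_eq_left (by linarith : x - n ≤ 0), mul_zero, sub_zero]
        exact mul_nonneg vonMangoldt_nonneg (le_max_left _ _)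

lemma exists_abs_mul_psiSmooth_inv_sub_le : ∃ C : ℝ, 0 < C ∧ ∀ x : ℝ, 1 < x →
    |x * psiSmooth x⁻¹ - (x - 1) ^ 2 / 2| ≤ C * (x / Real.log x) ^ 2 := by
  obtain ⟨C, hC0, hC⟩ := exists_abs_psiSmoothError_le
  refine ⟨C, hC0, fun x hx => ?_⟩
  have hx0 : 0 < x := by linarith
  have hl : 0 < Real.log x := log_pos hx
  have h := hC x⁻¹ (by positivity)
  rw [log_inv, neg_sq, div_inv_eq_mul] at h
  have h1 : x * psiSmooth x⁻¹ - (x - 1) ^ 2 / 2 = x * psiSmoothError x⁻¹ := by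
    rw [psiSmoothError, max_eq_right (sub_nonneg.2 (inv_le_one_of_one_le₀ hx.le))]
    field_simp
  rw [h1, abs_mul, abs_of_pos hx0, div_pow, mul_div_assoc', le_div_iff₀ (by positivity)]
  nlinarith

/-- The prime number theorem with error term `O(x / log x)`. -/
lemma exists_abs_psi_sub_le : ∃ C : ℝ, 0 < C ∧ ∀ x : ℝ, Real.exp 2 ≤ x →
    |Chebyshev.psi x - x| ≤ C * (x / Real.log x) := by
  obtain ⟨C, hC0, hC⟩ := exists_abs_mul_psiSmooth_inv_sub_le
  refine ⟨5 * C + 2, by positivity, fun x hx => ?_⟩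
  have hx0 : 0 < x := (exp_pos 2).trans_le hx
  have hx3 : 3 ≤ x := by linarith [add_one_le_exp (2 : ℝ)]
  have hL : 2 ≤ Real.log x := (le_log_iff_exp_le hx0).2 hx
  have hL0 : 0 < Real.log x := by linarith
  set h : ℝ := 1 / Real.log x with hh
  have hh0 : 0 < h := by positivity
  have hh2 : h ≤ 1 / 2 := one_div_le_one_div_of_le (by norm_num) hL
  have hxL : x / Real.log x = x * h := by rw [hh]; ring
  have hxh1 : 1 ≤ x * h := by
    rw [← hxL, one_le_div hL0]
    linarith [log_le_sub_one_of_pos hx0]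
  have hxh : 0 < x * h := by positivity
  have hS := abs_le.1 (hC x (by linarith))
  rw [hxL] at hS ⊢
  have hup : Chebyshev.psi x ≤ x + (5 * C + 2) * (x * h) := by
    have hy1 : 1 < x * (1 + h) := by nlinarith
    have hS' := abs_le.1 (hC _ hy1)
    have hconv := psi_mul_sub_le hx0 (by linarith : 0 < x * (1 + h))
    have hb : (x * (1 + h) / Real.log (x * (1 + h))) ^ 2 ≤ 4 * (x * h) ^ 2 := by
      have hlog : Real.log x ≤ Real.log (x * (1 + h)) := log_le_log hx0 (by nlinarith)
      have : x * (1 + h) / Real.log (x * (1 + h)) ≤ 2 * (x * h) := by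
        rw [← hxL, mul_div_assoc']
        exact div_le_div₀ (by linarith) (by nlinarith) hL0 hlog
      have h0 : 0 ≤ x * (1 + h) / Real.log (x * (1 + h)) := by
        have := hL0.trans_le hlog
        positivity
      nlinarith
    have hfin : Chebyshev.psi x * (x * h) ≤ (x + (5 * C + 2) * (x * h)) * (x * h) := by
      nlinarith [mul_le_mul_of_nonneg_left hb hC0.le]
    exact le_of_mul_le_mul_right hfin hxh
  have hlow : x - (5 * C + 2) * (x * h) ≤ Chebyshev.psi x := by
    have hy1 : 1 < x * (1 - h) := by nlinarith
    have hS' := abs_le.1 (hC _ hy1)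
    have hconv := psi_mul_sub_le hx0 (by linarith : 0 < x * (1 - h))
    have hb : (x * (1 - h) / Real.log (x * (1 - h))) ^ 2 ≤ 4 * (x * h) ^ 2 := by
      have hlog : Real.log x / 2 ≤ Real.log (x * (1 - h)) := by
        have h1 : Real.log (x / 2) ≤ Real.log (x * (1 - h)) :=
          log_le_log (by positivity) (by nlinarith)
        rw [log_div hx0.ne' (by norm_num)] at h1
        linarith [log_two_lt_d9]
      have hpos : 0 < Real.log (x * (1 - h)) := by linarith
      have : x * (1 - h) / Real.log (x * (1 - h)) ≤ 2 * (x * h) := by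
        rw [← hxL, div_le_iff₀ hpos]
        have h2 : 2 * (x / Real.log x) * (Real.log x / 2) = x := by field_simp
        have h3 : 2 * (x / Real.log x) * (Real.log x / 2) ≤
          2 * (x / Real.log x) * Real.log (x * (1 - h)) := by gcongr
        nlinarith
      have h0 : 0 ≤ x * (1 - h) / Real.log (x * (1 - h)) := by
        have : 0 < x * (1 - h) := by linarith
        positivity
      nlinarith
    have hfin : (x - (5 * C + 2) * (x * h)) * (x * h) ≤ Chebyshev.psi x * (x * h) := by
      nlinarith [mul_le_mul_of_nonneg_left hb hC0.le]
    exact le_of_mul_le_mul_right hfin hxh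
  rw [abs_le]
  constructor <;> linarith

lemma hasDerivAt_rpow_mul_log_pow (b : ℝ) (m : ℕ) {t : ℝ} (ht : 1 < t) :
    HasDerivAt (fun t : ℝ => t ^ b * Real.log t ^ m)
      (t ^ (b - 1) * Real.log t ^ m * (b + m / Real.log t)) t := by
  have ht0 : 0 < t := by linarith
  have hL : Real.log t ≠ 0 := (log_pos ht).ne'
  have h := (hasDerivAt_rpow_const (x := t) (p := b) (Or.inl ht0.ne')).mul
    ((hasDerivAt_log ht0.ne').pow m)
  refine h.congr_deriv ?_
  rw [rpow_sub_one ht0.ne']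
  rcases m with _ | m
  · simp
    ring
  · simp only [Nat.add_sub_cancel, Pi.pow_apply]
    field_simp
    ring

lemma tendsto_rpow_neg_mul_log_pow_atTop {b : ℝ} (hb : 0 < b) (m : ℕ) :
    Tendsto (fun t : ℝ => t ^ (-b) * Real.log t ^ m) atTop (nhds 0) := by
  have h := (isLittleO_log_rpow_rpow_atTop m hb).tendsto_div_nhds_zero
  refine h.congr' ?_
  filter_upwards [eventually_gt_atTop 0] with t ht
  rw [rpow_natCast, rpow_neg ht.le]
  ring

lemma summable_rpow_mul_log_pow {a : ℝ} (ha : 1 < a) (m : ℕ) :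
    Summable fun n : ℕ => (n : ℝ) ^ (-a) * Real.log n ^ m := by
  have h := isLittleO_log_rpow_rpow_atTop m (half_pos (sub_pos.2 ha))
  have h2 : (fun t : ℝ => t ^ (-a) * Real.log t ^ m) =O[atTop]
      fun t : ℝ => t ^ (-((a + 1) / 2)) := by
    refine ((Asymptotics.isBigO_refl (fun t : ℝ => t ^ (-a)) atTop).mul h.isBigO).congr' ?_ ?_
    · filter_upwards with t
      rw [rpow_natCast]
    · filter_upwards [eventually_gt_atTop 0] with t ht
      rw [← rpow_add ht]
      ring_nf
  exact summable_of_isBigO_nat (Real.summable_nat_rpow.2 (by linarith))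
    (h2.comp_tendsto tendsto_natCast_atTop_atTop)

open MeasureTheory in
/-- Partial summation for `∑ c n n ^ (-a) log ^ m n` over `x < n ≤ N`, given the average of `c`. -/
lemma exists_abs_sum_Ioc_sub_le {c : ℕ → ℝ} {A C x₀ : ℝ} (hC : 0 ≤ C)
    (hc : ∀ t : ℝ, x₀ ≤ t →
      |∑ n ∈ Finset.Icc 0 ⌊t⌋₊, c n - A * t| ≤ C * (t / Real.log t))
    {a : ℝ} (ha : 1 < a) (m : ℕ) : ∃ K x₁ : ℝ, ∀ x : ℝ, x₁ ≤ x → ∀ N : ℕ, x ≤ N →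
      |∑ n ∈ Finset.Ioc ⌊x⌋₊ N, (n : ℝ) ^ (-a) * Real.log n ^ m * c n -
          A * (x ^ (1 - a) * Real.log x ^ m / (a - 1))| ≤
        K * (x ^ (1 - a) * Real.log x ^ m / (a - 1) / Real.log x) +
          K * ((N : ℝ) ^ (1 - a) * Real.log N ^ m / (a - 1)) := by
  have ha1 : 0 < a - 1 := sub_pos.2 ha
  set D : ℝ := |A| * m * (1 + a / (a - 1)) + (a + m) * C with hD
  have hD0 : 0 ≤ D := by positivity
  refine ⟨|A| + C * (a - 1) + 2 * D, max x₀ (max (Real.exp 1) (Real.exp (2 * m / (a - 1)))),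
    fun x hx N hxN => ?_⟩
  have hx0 : x₀ ≤ x := (le_max_left _ _).trans hx
  have hx1 : Real.exp 1 ≤ x := (le_max_left _ _).trans ((le_max_right _ _).trans hx)
  have hx2 : Real.exp (2 * m / (a - 1)) ≤ x :=
    (le_max_right _ _).trans ((le_max_right _ _).trans hx)
  set w : ℝ → ℝ := fun t => t ^ (-a) * Real.log t ^ m with hw
  set w' : ℝ → ℝ := fun t => t ^ (-a - 1) * Real.log t ^ m * (-a + m / Real.log t) with hw'
  set V : ℝ → ℝ := fun t => t ^ (1 - a) * Real.log t ^ m / (a - 1) with hV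
  set V' : ℝ → ℝ := fun t => t ^ (-a) * Real.log t ^ m * (1 - a + m / Real.log t) / (a - 1)
    with hV'
  set Q : ℝ → ℝ := fun t => V t / Real.log t with hQ
  set Q' : ℝ → ℝ := fun t => (V' t * Real.log t - V t * t⁻¹) / Real.log t ^ 2 with hQ'
  set M : ℝ → ℝ := fun t => ∑ n ∈ Finset.Icc 0 ⌊t⌋₊, c n with hM
  have hpos : ∀ t : ℝ, x ≤ t → 0 < t ∧ 1 < t ∧ 1 ≤ Real.log t ∧ 2 * m / (a - 1) ≤ Real.log t := by
    intro t ht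
    have h0 : 0 < t := (exp_pos 1).trans_le (hx1.trans ht)
    refine ⟨h0, ?_, (le_log_iff_exp_le h0).2 (hx1.trans ht),
      (le_log_iff_exp_le h0).2 (hx2.trans ht)⟩
    linarith [add_one_le_exp (1 : ℝ)]
  have hwd : ∀ t : ℝ, x ≤ t → HasDerivAt w (w' t) t := fun t ht =>
    hasDerivAt_rpow_mul_log_pow (-a) m (hpos t ht).2.1
  have hVd : ∀ t : ℝ, x ≤ t → HasDerivAt V (V' t) t := fun t ht => by
    have h := (hasDerivAt_rpow_mul_log_pow (1 - a) m (hpos t ht).2.1).div_const (a - 1)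
    rwa [show 1 - a - 1 = -a by ring] at h
  have hQd : ∀ t : ℝ, x ≤ t → HasDerivAt Q (Q' t) t := fun t ht =>
    (hVd t ht).div (hasDerivAt_log (hpos t ht).1.ne') (by linarith [(hpos t ht).2.2.1])
  have hV0 : ∀ t : ℝ, x ≤ t → 0 ≤ V t := fun t ht => by
    obtain ⟨h0, h1, h2, h3⟩ := hpos t ht
    have : 0 ≤ Real.log t := by linarith
    positivity
  have hcont : ∀ {g : ℝ → ℝ}, (∀ t : ℝ, x ≤ t → ContinuousAt g t) →
      ContinuousOn g (Set.Icc x N) := fun hg t ht => (hg t ht.1).continuousWithinAt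
  have hw'c : ContinuousOn w' (Set.Icc x N) := hcont fun t ht => by
    obtain ⟨h0, h1, h2, h3⟩ := hpos t ht
    have hl := continuousAt_log h0.ne'
    exact ((continuousAt_rpow_const _ _ (Or.inl h0.ne')).mul (hl.pow m)).mul
      (continuousAt_const.add (continuousAt_const.div hl (by linarith)))
  have hV'c : ∀ t : ℝ, x ≤ t → ContinuousAt V' t := fun t ht => by
    obtain ⟨h0, h1, h2, h3⟩ := hpos t ht
    have hl := continuousAt_log h0.ne'
    exact (((continuousAt_rpow_const _ _ (Or.inl h0.ne')).mul (hl.pow m)).mul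
      (continuousAt_const.add (continuousAt_const.div hl (by linarith)))).div_const _
  have hQ'c : ContinuousOn Q' (Set.Icc x N) := hcont fun t ht => by
    obtain ⟨h0, h1, h2, h3⟩ := hpos t ht
    have hl := continuousAt_log h0.ne'
    exact (((hV'c t ht).mul hl).sub ((hVd t ht).continuousAt.mul (continuousAt_inv₀ h0.ne'))).div
      (hl.pow 2) (by positivity)
  have hE : ∀ t : ℝ, x ≤ t → |w t * M t - A * (a - 1) * V t| ≤ C * (a - 1) * Q t := by
    intro t ht
    obtain ⟨h0, h1, h2, h3⟩ := hpos t ht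
    have hVw : V t * (a - 1) = w t * t := by
      simp only [hV, hw]
      rw [show 1 - a = -a + 1 by ring, rpow_add_one h0.ne']
      field_simp
    have hw0 : 0 ≤ w t := mul_nonneg (by positivity) (pow_nonneg (by linarith) m)
    rw [show w t * M t - A * (a - 1) * V t = w t * (M t - A * t) by linear_combination -A * hVw,
      abs_mul, abs_of_nonneg hw0]
    refine (mul_le_mul_of_nonneg_left (hc t (hx0.trans ht)) hw0).trans (le_of_eq ?_)
    simp only [hQ]
    rw [show C * (a - 1) * (V t / Real.log t) = C * (V t * (a - 1)) / Real.log t by ring, hVw]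
    ring
  have hpt : ∀ t : ℝ, x ≤ t → |w' t * M t - A * a * V' t| ≤ -(2 * D) * Q' t := by
    intro t ht
    obtain ⟨h0, h1, h2, h3⟩ := hpos t ht
    set L := Real.log t with hL
    have hL0 : 0 < L := by linarith
    have ht1 : t ^ (1 - a) = t ^ (-a) * t := by
      rw [show 1 - a = -a + 1 by ring, rpow_add_one h0.ne']
    have hw0 : 0 ≤ t ^ (-a) * L ^ m / L := by positivity
    have hEt := hc t (hx0.trans ht)
    set E := (M t - A * t) * L / t with hEdef
    have hE1 : |E| ≤ C := by
      rw [hEdef, abs_div, abs_mul, abs_of_pos hL0, abs_of_pos h0, div_le_iff₀ h0]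
      calc |M t - A * t| * L ≤ C * (t / L) * L := by gcongr
        _ = C * t := by field_simp
    have hME : M t = A * t + E * t / L := by rw [hEdef]; field_simp; ring
    have hmL : (m : ℝ) / L ≤ m := div_le_self (by positivity) h2
    have hmL0 : 0 ≤ (m : ℝ) / L := by positivity
    have hQ'le : t ^ (-a) * L ^ m / L ≤ -2 * Q' t := by
      have hq : Q' t = t ^ (-a) * L ^ m / L * (-1 + (m - 1) / (a - 1) / L) := by
        simp only [hQ', hV', hV, ← hL]
        rw [ht1]
        field_simp
        ring
      have h5 : (m - 1) / (a - 1) / L ≤ 1 / 2 := by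
        rw [div_le_iff₀ hL0, div_le_iff₀ ha1]
        rw [div_le_iff₀ ha1] at h3
        linarith
      rw [hq]
      nlinarith
    have hid : w' t * M t - A * a * V' t = t ^ (-a) * L ^ m / L *
        (A * m * (1 - a / (a - 1)) + (-a + m / L) * E) := by
      simp only [hw', hV', ← hL]
      rw [hME, rpow_sub_one h0.ne']
      field_simp
      ring
    have habs : |A * m * (1 - a / (a - 1)) + (-a + m / L) * E| ≤ D := by
      refine (abs_add_le _ _).trans (add_le_add ?_ ?_)
      · rw [abs_mul, abs_mul, Nat.abs_cast]
        have : 0 ≤ a / (a - 1) := by positivity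
        refine mul_le_mul_of_nonneg_left ?_ (by positivity)
        rw [abs_le]
        constructor <;> linarith
      · rw [abs_mul]
        refine mul_le_mul ?_ hE1 (abs_nonneg _) (by positivity)
        rw [abs_le]
        constructor <;> linarith
    rw [hid, abs_mul, abs_of_nonneg hw0]
    nlinarith [mul_le_mul_of_nonneg_left habs hw0, mul_le_mul_of_nonneg_right hQ'le hD0]
  have habel := sum_mul_eq_sub_sub_integral_mul c (hpos x le_rfl).1.le hxN
    (fun t ht => (hwd t ht.1).differentiableAt)
    ((hw'c.integrableOn_Icc).congr_fun (fun t ht => (hwd t ht.1).deriv.symm) measurableSet_Icc)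
  rw [Nat.floor_natCast] at habel
  have hsetint : ∫ t in Set.Ioc x N, deriv w t * ∑ k ∈ Finset.Icc 0 ⌊t⌋₊, c k =
      ∫ t in x..N, w' t * M t := by
    rw [intervalIntegral.integral_of_le hxN]
    exact setIntegral_congr_fun measurableSet_Ioc fun t ht => by
      simp only [(hwd t ht.1.le).deriv, hM]
  have hMint : IntervalIntegrable (fun t => w' t * M t) volume x N := by
    rw [intervalIntegrable_iff_integrableOn_Icc_of_le hxN]
    exact integrableOn_mul_sum_Icc c (hpos x le_rfl).1.le hw'c.integrableOn_Icc
  have hV'int : IntervalIntegrable V' volume x N :=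
    (hcont hV'c).intervalIntegrable_of_Icc hxN
  have hQ'int : IntervalIntegrable Q' volume x N := hQ'c.intervalIntegrable_of_Icc hxN
  have hmem : ∀ t ∈ Set.uIcc x (N : ℝ), x ≤ t := fun t ht => by
    rw [Set.uIcc_of_le hxN] at ht
    exact ht.1
  have hVint := intervalIntegral.integral_eq_sub_of_hasDerivAt
    (fun t ht => hVd t (hmem t ht)) hV'int
  have hQint := intervalIntegral.integral_eq_sub_of_hasDerivAt
    (fun t ht => hQd t (hmem t ht)) hQ'int
  have herr := intervalIntegral.norm_integral_le_of_norm_le (μ := volume)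
    (f := fun t => w' t * M t - A * a * V' t) hxN
    (Eventually.of_forall fun t ht => hpt t ht.1.le) (hQ'int.const_mul _)
  rw [intervalIntegral.integral_sub hMint (hV'int.const_mul _),
    intervalIntegral.integral_const_mul, intervalIntegral.integral_const_mul, hVint, hQint,
    Real.norm_eq_abs, ← hsetint] at herr
  have hEx := hE x le_rfl
  have hEN := hE N hxN
  have hQN : Q N ≤ V N := div_le_self (hV0 N hxN) (hpos N hxN).2.2.1
  have hQN0 : 0 ≤ Q N := div_nonneg (hV0 N hxN) (by linarith [(hpos N hxN).2.2.1])
  have hQx0 : 0 ≤ Q x := div_nonneg (hV0 x le_rfl) (by linarith [(hpos x le_rfl).2.2.1])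
  have hVN0 := hV0 N hxN
  change |_ - A * V x| ≤ _ * Q x + _ * V N
  rw [habel]
  have hAV : |A * V N| = |A| * V N := by rw [abs_mul, abs_of_nonneg hVN0]
  have hMN : ∑ k ∈ Finset.Icc 0 N, c k = M N := by simp only [hM, Nat.floor_natCast]
  rw [hMN]
  change |w N * M N - w x * M x - _ - _| ≤ _
  rw [abs_le] at herr hEx hEN ⊢
  have hAV1 := le_abs_self (A * V N)
  have hAV2 := neg_abs_le (A * V N)
  have hCQ : C * (a - 1) * Q N ≤ C * (a - 1) * V N := by gcongr
  have hDV : 0 ≤ D * V N := by positivity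
  have hDQ : 0 ≤ D * Q N := by positivity
  have hAQ : 0 ≤ |A| * Q x := by positivity
  rw [hAV] at hAV1 hAV2
  constructor <;> linarith [herr.1, herr.2, hEx.1, hEx.2, hEN.1, hEN.2]

lemma summable_ite_lt {f : ℕ → ℝ} (hf : Summable f) (x : ℝ) :
    Summable fun n : ℕ => if x < (n : ℝ) then f n else 0 := by
  refine (hf.indicator {n : ℕ | x < n}).congr fun n => ?_
  simp only [Set.indicator_apply, Set.mem_ofPred_eq]

lemma isBigO_tsum_tail_sub {c : ℕ → ℝ} {A C x₀ : ℝ} (hC : 0 ≤ C)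
    (hc : ∀ t : ℝ, x₀ ≤ t →
      |∑ n ∈ Finset.Icc 0 ⌊t⌋₊, c n - A * t| ≤ C * (t / Real.log t))
    {a : ℝ} (ha : 1 < a) (m : ℕ)
    (hsum : Summable fun n : ℕ => (n : ℝ) ^ (-a) * Real.log n ^ m * c n) :
    (fun x : ℝ => (∑' n : ℕ, if x < (n : ℝ) then (n : ℝ) ^ (-a) * Real.log n ^ m * c n else 0) -
        A * (x ^ (1 - a) * Real.log x ^ m / (a - 1)))
      =O[atTop] (fun x : ℝ => x ^ (1 - a) * Real.log x ^ m / (a - 1) / Real.log x) := by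
  obtain ⟨K, x₁, hK⟩ := exists_abs_sum_Ioc_sub_le hC hc ha m
  refine Asymptotics.IsBigO.of_bound |K| ?_
  filter_upwards [eventually_ge_atTop x₁, eventually_ge_atTop 0] with x hx hx0
  rw [Real.norm_eq_abs, Real.norm_eq_abs, ← abs_mul]
  refine le_trans ?_ (le_abs_self _)
  have hsum' := summable_ite_lt hsum x
  have hIoc : ∀ N : ℕ, ∑ n ∈ Finset.range (N + 1),
      (if x < (n : ℝ) then (n : ℝ) ^ (-a) * Real.log n ^ m * c n else 0) =
        ∑ n ∈ Finset.Ioc ⌊x⌋₊ N, (n : ℝ) ^ (-a) * Real.log n ^ m * c n := by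
    intro N
    rw [← Finset.sum_filter]
    congr 1
    ext n
    simp [← Nat.floor_lt hx0, and_comm]
  have hlim : Tendsto (fun N : ℕ => |∑ n ∈ Finset.Ioc ⌊x⌋₊ N,
      (n : ℝ) ^ (-a) * Real.log n ^ m * c n - A * (x ^ (1 - a) * Real.log x ^ m / (a - 1))|) atTop
      (nhds |(∑' n : ℕ, if x < (n : ℝ) then (n : ℝ) ^ (-a) * Real.log n ^ m * c n else 0) -
        A * (x ^ (1 - a) * Real.log x ^ m / (a - 1))|) := by
    refine (Tendsto.sub_const ?_ _).abs
    have h := hsum'.hasSum.tendsto_sum_nat.comp (tendsto_add_atTop_nat 1)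
    exact h.congr hIoc
  have hV : Tendsto (fun N : ℕ => (N : ℝ) ^ (1 - a) * Real.log N ^ m / (a - 1)) atTop (nhds 0) := by
    have h := ((tendsto_rpow_neg_mul_log_pow_atTop (sub_pos.2 ha) m).div_const (a - 1)).comp
      tendsto_natCast_atTop_atTop
    rw [zero_div] at h
    refine h.congr fun N => ?_
    simp only [Function.comp_apply, neg_sub]
  have hlim' := (hV.const_mul K).const_add
    (K * (x ^ (1 - a) * Real.log x ^ m / (a - 1) / Real.log x))
  rw [mul_zero, add_zero] at hlim'
  refine le_of_tendsto_of_tendsto hlim hlim' ?_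
  filter_upwards [eventually_ge_atTop ⌈x⌉₊] with N hN
  exact hK x hx N (Nat.ceil_le.1 hN)

lemma psi_sub_theta_le_mul_div_log {t : ℝ} (ht : 1 < t) :
    Chebyshev.psi t - Chebyshev.theta t ≤ 32 * (t / Real.log t) := by
  have hL : 0 < Real.log t := log_pos ht
  have h1 := log_le_rpow_div (x := t) (ε := 1 / 4) (by linarith) (by norm_num)
  have h2 : (t ^ (1 / 4 : ℝ)) ^ 2 = √t := by
    rw [← rpow_natCast, ← rpow_mul (by linarith), sqrt_eq_rpow]
    norm_num
  have h3 : √t * √t = t := mul_self_sqrt (by linarith)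
  have h4 : Real.log t ^ 2 ≤ 16 * √t := by
    rw [← h2]
    nlinarith
  refine (Chebyshev.psi_sub_theta_le ht.le).trans ?_
  rw [mul_div_assoc', le_div_iff₀ hL]
  nlinarith [mul_le_mul_of_nonneg_left h4 (sqrt_nonneg t)]

theorem vonMangoldt_pow_tail_asymp (k : ℕ) (hk : 1 ≤ k) (a : ℝ) (ha : 1 < a) :
    (fun x : ℝ =>
        (∑' n : ℕ, if x < (n : ℝ) then (Λ n) ^ k * (n : ℝ) ^ (-a) else 0) -
          x ^ (1 - a) * (Real.log x) ^ (k - 1) / (a - 1))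
      =O[atTop]
    (fun x : ℝ => (x ^ (1 - a) * (Real.log x) ^ (k - 1) / (a - 1)) / Real.log x) := by
  obtain ⟨m, rfl⟩ := Nat.exists_eq_add_of_le' hk
  rw [Nat.add_sub_cancel]
  set c : ℕ → ℝ := fun n => if n.Prime then 0 else Λ n with hc
  have hlog : ∀ n : ℕ, 0 ≤ Real.log n := fun n => log_natCast_nonneg n
  have hw : ∀ n : ℕ, 0 ≤ (n : ℝ) ^ (-a) * Real.log n ^ m := fun n =>
    mul_nonneg (by positivity) (pow_nonneg (hlog n) m)
  have hc0 : ∀ n, 0 ≤ c n := fun n => by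
    simp only [hc]
    split_ifs
    exacts [le_rfl, vonMangoldt_nonneg]
  have hcΛ : ∀ n, c n ≤ Λ n := fun n => by
    simp only [hc]
    split_ifs
    exacts [vonMangoldt_nonneg, le_rfl]
  have hsumΛ : Summable fun n : ℕ => (n : ℝ) ^ (-a) * Real.log n ^ m * Λ n := by
    refine (summable_rpow_mul_log_pow ha (m + 1)).of_nonneg_of_le
      (fun n => mul_nonneg (hw n) vonMangoldt_nonneg) fun n => ?_
    rw [pow_succ, ← mul_assoc]
    exact mul_le_mul_of_nonneg_left vonMangoldt_le_log (hw n)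
  have hsumc : Summable fun n : ℕ => (n : ℝ) ^ (-a) * Real.log n ^ m * c n :=
    hsumΛ.of_nonneg_of_le (fun n => mul_nonneg (hw n) (hc0 n)) fun n =>
      mul_le_mul_of_nonneg_left (hcΛ n) (hw n)
  have hle : ∀ n : ℕ, Λ n ^ (m + 1) * (n : ℝ) ^ (-a) ≤
      (n : ℝ) ^ (-a) * Real.log n ^ m * Λ n := fun n => by
    have h1 : Λ n ^ m ≤ Real.log n ^ m := pow_le_pow_left₀ vonMangoldt_nonneg vonMangoldt_le_log m
    have h2 : 0 ≤ (n : ℝ) ^ (-a) * Λ n := mul_nonneg (by positivity) vonMangoldt_nonneg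
    calc Λ n ^ (m + 1) * (n : ℝ) ^ (-a) = (n : ℝ) ^ (-a) * Λ n * Λ n ^ m := by ring
      _ ≤ (n : ℝ) ^ (-a) * Λ n * Real.log n ^ m := mul_le_mul_of_nonneg_left h1 h2
      _ = (n : ℝ) ^ (-a) * Real.log n ^ m * Λ n := by ring
  have hge : ∀ n : ℕ, (n : ℝ) ^ (-a) * Real.log n ^ m * Λ n -
      Λ n ^ (m + 1) * (n : ℝ) ^ (-a) ≤ (n : ℝ) ^ (-a) * Real.log n ^ m * c n := fun n => by
    by_cases hn : n.Prime
    · simp only [hc, hn, if_true, vonMangoldt_apply_prime hn]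
      exact le_of_eq (by ring)
    · simp only [hc, hn, if_false]
      have : 0 ≤ Λ n ^ (m + 1) * (n : ℝ) ^ (-a) :=
        mul_nonneg (pow_nonneg vonMangoldt_nonneg _) (by positivity)
      linarith
  have hsumk : Summable fun n : ℕ => Λ n ^ (m + 1) * (n : ℝ) ^ (-a) :=
    hsumΛ.of_nonneg_of_le
      (fun n => mul_nonneg (pow_nonneg vonMangoldt_nonneg _) (by positivity)) hle
  obtain ⟨C, hC0, hC⟩ := exists_abs_psi_sub_le
  have hΛ := isBigO_tsum_tail_sub (c := fun n => Λ n) (A := 1) hC0.le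
    (fun t ht => by rw [← Chebyshev.psi_eq_sum_Icc, one_mul]; exact hC t ht) ha m hsumΛ
  have hprime := isBigO_tsum_tail_sub (c := c) (A := 0) (C := 32) (x₀ := 2) (by norm_num)
    (fun t ht => by
      have h : ∑ n ∈ Finset.Icc 0 ⌊t⌋₊, c n = Chebyshev.psi t - Chebyshev.theta t := by
        rw [Chebyshev.psi_sub_theta_eq_sum_not_prime, Finset.sum_filter,
          ← Finset.add_sum_Ioc_eq_sum_Icc (Nat.zero_le _)]
        simp [hc, ite_not]
      rw [h, zero_mul, sub_zero, abs_of_nonneg (sub_nonneg.2 (Chebyshev.theta_le_psi t))]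
      exact psi_sub_theta_le_mul_div_log (by linarith)) ha m hsumc
  simp only [one_mul] at hΛ
  simp only [zero_mul, sub_zero] at hprime
  have hdiff : (fun x : ℝ =>
      (∑' n : ℕ, if x < (n : ℝ) then (n : ℝ) ^ (-a) * Real.log n ^ m * Λ n else 0) -
        ∑' n : ℕ, if x < (n : ℝ) then Λ n ^ (m + 1) * (n : ℝ) ^ (-a) else 0) =O[atTop]
      fun x : ℝ => ∑' n : ℕ, if x < (n : ℝ) then (n : ℝ) ^ (-a) * Real.log n ^ m * c n else 0 := by
    refine Asymptotics.IsBigO.of_bound 1 (Eventually.of_forall fun x => ?_)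
    rw [one_mul, ← (summable_ite_lt hsumΛ x).tsum_sub (summable_ite_lt hsumk x), Real.norm_eq_abs, abs_of_nonneg]
    · refine le_trans ?_ (le_abs_self _)
      refine ((summable_ite_lt hsumΛ x).sub (summable_ite_lt hsumk x)).tsum_le_tsum (fun n => ?_) (summable_ite_lt hsumc x)
      split_ifs
      exacts [hge n, (sub_self _).le]
    · refine tsum_nonneg fun n => ?_
      split_ifs
      exacts [sub_nonneg.2 (hle n), (sub_self _).ge]
  refine (hΛ.sub (hdiff.trans hprime)).congr_left fun x => ?_
  ring
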